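/- Let X be a holomorphic vector field on a neighborhood of 0 in ℂⁿ with X(0) = 0, and suppose DX(0) = S + N where S is the diagonal endomorphism of ℂⁿ with diagonal entries γ = (γ₁, …, γₙ) ∈ ℂⁿ, N is nilpotent, and S∘N = N∘S. Let r be the toric degree of γ and let ρ¹, …, ρʳ ∈ ℤⁿ be a ℤ-basis of Q(γ). Then X admits a convergent Poincaré–Dulac normalization if and only if there exist an open neighborhood U of 0 in ℂⁿ and holomorphic vector fields V₁, …, V_r : U → ℂⁿ such that: (a) V_k(0) = 0 and DV_k(0) is the diagonal endomorphism with entries ρᵏ = (ρᵏ₁, …, ρᵏₙ) for each k; (b) [V_j, V_k] = 0 on U for all j, k; (c) [X, V_k] = 0 on U for all k; (d) for each k and each x ∈ U there is a curve c : ℝ → U with c(0) = x, satisfying the real differential equation c′(t) = i·V_k(c(t)) for all t ∈ ℝ (where i = √−1 acts by complex scalar multiplication), and c(t + 2π) = c(t) for all t ∈ ℝ. -/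

import Mathlib

/-- `Y` is in Poincaré–Dulac normal form on the neighborhood `U` of `0`:
writing the Jordan–Chevalley decomposition `DY(0) = S + N` with `S` semisimple,
`N` nilpotent and `S ∘ N = N ∘ S`, the Lie bracket `[Y, Yˢ]` (where `Yˢ x = S x`)
vanishes on `U`. -/
def InPDNormalForm (𝕂 : Type*) [NontriviallyNormedField 𝕂] {n : ℕ}
    (Y : (Fin n → 𝕂) → (Fin n → 𝕂)) (U : Set (Fin n → 𝕂)) : Prop :=
  ∃ S N : (Fin n → 𝕂) →L[𝕂] (Fin n → 𝕂),
    fderiv 𝕂 Y 0 = S + N ∧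
    Module.End.IsSemisimple (S : Module.End 𝕂 (Fin n → 𝕂)) ∧
    IsNilpotent (N : Module.End 𝕂 (Fin n → 𝕂)) ∧
    S ∘L N = N ∘L S ∧
    ∀ x ∈ U, VectorField.lieBracket 𝕂 Y (fun y => S y) x = 0

/-- `X` admits a convergent Poincaré–Dulac normalization: there are an analytic
vector field `Y` near `0`, in Poincaré–Dulac normal form with `Y 0 = 0`, and an
analytic map `φ` near `0` with `φ 0 = 0` and `Dφ(0)` invertible, such that
`Dφ(x) (Y x) = X (φ x)` for all `x` near `0`. -/
def AdmitsPDNormalization (𝕂 : Type*) [NontriviallyNormedField 𝕂] {n : ℕ}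
    (X : (Fin n → 𝕂) → (Fin n → 𝕂)) : Prop :=
  ∃ (V : Set (Fin n → 𝕂)) (Y φ : (Fin n → 𝕂) → (Fin n → 𝕂)),
    IsOpen V ∧ (0 : Fin n → 𝕂) ∈ V ∧
    AnalyticOnNhd 𝕂 Y V ∧ AnalyticOnNhd 𝕂 φ V ∧
    Y 0 = 0 ∧ φ 0 = 0 ∧ Function.Bijective (fderiv 𝕂 φ 0) ∧
    InPDNormalForm 𝕂 Y V ∧
    ∀ x ∈ V, fderiv 𝕂 φ x (Y x) = X (φ x)


/-- `c ∈ ℤⁿ` is a resonance relation for the eigenvalues `γ ∈ ℂⁿ`: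
`Σ c_j γ_j = 0`, all `c_j ≥ -1`, `Σ c_j ≥ 1`, and at most one `c_j` is
negative. -/
def IsResonanceRelation {n : ℕ} (γ : Fin n → ℂ) (c : Fin n → ℤ) : Prop :=
  (∑ j, (c j : ℂ) * γ j = 0) ∧ (∀ j, -1 ≤ c j) ∧ (1 ≤ ∑ j, c j) ∧
    ∀ j k, c j < 0 → c k < 0 → j = k

/-- The lattice `Q(γ) ⊆ ℤⁿ` of `ρ` with `Σ ρ_j c_j = 0` for every resonance
relation `c`, and `ρ_j = ρ_k` whenever `γ_j = γ_k`. -/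
def QLattice {n : ℕ} (γ : Fin n → ℂ) : Set (Fin n → ℤ) :=
  {ρ | (∀ c, IsResonanceRelation γ c → ∑ j, ρ j * c j = 0) ∧
    ∀ j k, γ j = γ k → ρ j = ρ k}

/-- The diagonal (continuous) linear endomorphism of `ℂⁿ` with diagonal
entries `γ`. -/
noncomputable def diagCLM {n : ℕ} (γ : Fin n → ℂ) :
    (Fin n → ℂ) →L[ℂ] (Fin n → ℂ) :=
  LinearMap.toContinuousLinearMap (Matrix.toLin' (Matrix.diagonal γ))

/-!
Torus action to normal form (Bochner linearization): the flow of `2πi • V k` is the identity at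
time `1`, so the average of a coordinate change over it, twisted by the linear flow, is a new
coordinate change in which `V k` is linear. Averaging does not spoil the linearity of a field that
commutes with `V k`, so the `V k` are linearized together, one after the other. Expanding the
entries of `γ` in a basis of the `ℤ`-module they generate exhibits `diag γ` as a complex combination
of the `diag (ρ k)`; hence `diag γ` commutes with `X` in these coordinates.

Normal form to torus action: all monomials of a normal form are resonant, so it commutes with
`diag ρ` for every `ρ` in `Q(γ)`, and the normalization carries the standard torus action generated
by these fields to one that preserves `X`.
-/

open Filter Topology Set

section RelatedVectorFields

variable {𝕜 : Type*} [NontriviallyNormedField 𝕜]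
  {E F G : Type*} [NormedAddCommGroup E] [NormedSpace 𝕜 E] [NormedAddCommGroup F] [NormedSpace 𝕜 F]
  [NormedAddCommGroup G] [NormedSpace 𝕜 G]

theorem analyticAt_clm_apply {f : E → F →L[𝕜] G} {g : E → F} {x : E}
    (hf : AnalyticAt 𝕜 f x) (hg : AnalyticAt 𝕜 g x) : AnalyticAt 𝕜 (fun y => f y (g y)) x :=
  ((ContinuousLinearMap.id 𝕜 (F →L[𝕜] G)).analyticAt_bilinear (f x, g x)).comp₂ hf hg

variable (𝕜) in
/-- Near `x`, the vector fields `V` and `W` are `φ`-related: `φ` maps integral curves of `V` to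
integral curves of `W`. -/
def RelatedAt (φ : E → F) (V : E → E) (W : F → F) (x : E) : Prop :=
  ∀ᶠ y in 𝓝 x, fderiv 𝕜 φ y (V y) = W (φ y)

namespace RelatedAt

variable {φ : E → F} {V V₁ V₂ : E → E} {W W₁ W₂ : F → F} {x : E}

protected theorem congr {V' : E → E} {W' : F → F} (h : RelatedAt 𝕜 φ V W x)
    (hφ : ContinuousAt φ x) (hV : V =ᶠ[𝓝 x] V') (hW : W =ᶠ[𝓝 (φ x)] W') :
    RelatedAt 𝕜 φ V' W' x := by
  filter_upwards [h, hV, hφ.eventually hW] with y hy hVy hWy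
  rw [← hVy, hy, hWy]

protected theorem const_smul (c : 𝕜) (h : RelatedAt 𝕜 φ V W x) :
    RelatedAt 𝕜 φ (fun y => c • V y) (fun y => c • W y) x :=
  h.mono fun y hy => by rw [map_smul, hy]

protected theorem sum {κ : Type*} {V : κ → E → E} {W : κ → F → F} (s : Finset κ)
    (h : ∀ k ∈ s, RelatedAt 𝕜 φ (V k) (W k) x) :
    RelatedAt 𝕜 φ (fun y => ∑ k ∈ s, V k y) (fun y => ∑ k ∈ s, W k y) x := by
  filter_upwards [(Filter.eventually_all_finset s).2 h] with y hy
  rw [map_sum]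
  exact Finset.sum_congr rfl hy

protected theorem comp {ψ : F → G} {Z : G → G} (hWZ : RelatedAt 𝕜 ψ W Z (φ x))
    (hVW : RelatedAt 𝕜 φ V W x) (hψ : ∀ᶠ y in 𝓝 (φ x), DifferentiableAt 𝕜 ψ y)
    (hφ : ∀ᶠ y in 𝓝 x, DifferentiableAt 𝕜 φ y) : RelatedAt 𝕜 (ψ ∘ φ) V Z x := by
  have hc : ContinuousAt φ x := hφ.self_of_nhds.continuousAt
  filter_upwards [hVW, hφ, hc.eventually hWZ, hc.eventually hψ] with y hy hφy hWZy hψy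
  rw [fderiv_comp y hψy hφy, ContinuousLinearMap.comp_apply, hy, hWZy, Function.comp_apply]

theorem eventually_fderiv_apply [CompleteSpace E] [CompleteSpace F] (h : RelatedAt 𝕜 φ V W x)
    (hφ : AnalyticAt 𝕜 φ x) (hV : AnalyticAt 𝕜 V x) (hW : AnalyticAt 𝕜 W (φ x)) :
    ∀ᶠ y in 𝓝 x, ∀ v, fderiv 𝕜 φ y (fderiv 𝕜 V y v) + fderiv 𝕜 (fderiv 𝕜 φ) y v (V y) =
      fderiv 𝕜 W (φ y) (fderiv 𝕜 φ y v) := by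
  filter_upwards [eventually_eventually_nhds.2 h, hφ.eventually_analyticAt,
    hV.eventually_analyticAt, hφ.continuousAt.eventually hW.eventually_analyticAt]
    with y hy hφy hVy hWy v
  have hleft := hφy.fderiv.differentiableAt.hasFDerivAt.clm_apply hVy.differentiableAt.hasFDerivAt
  have hright := hWy.differentiableAt.hasFDerivAt.comp y hφy.differentiableAt.hasFDerivAt
  simpa using congr($(hleft.unique (hright.congr_of_eventuallyEq hy)) v)

theorem fderiv_apply_of_eq_zero [CompleteSpace E] [CompleteSpace F] (h : RelatedAt 𝕜 φ V W x)
    (hφ : AnalyticAt 𝕜 φ x) (hV : AnalyticAt 𝕜 V x) (hW : AnalyticAt 𝕜 W (φ x)) (hVx : V x = 0)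
    (v : E) : fderiv 𝕜 φ x (fderiv 𝕜 V x v) = fderiv 𝕜 W (φ x) (fderiv 𝕜 φ x v) := by
  simpa [hVx] using (h.eventually_fderiv_apply hφ hV hW).self_of_nhds v

protected theorem lieBracket [CompleteSpace E] [CompleteSpace F] (h₁ : RelatedAt 𝕜 φ V₁ W₁ x)
    (h₂ : RelatedAt 𝕜 φ V₂ W₂ x) (hφ : AnalyticAt 𝕜 φ x)
    (hV₁ : AnalyticAt 𝕜 V₁ x) (hV₂ : AnalyticAt 𝕜 V₂ x)
    (hW₁ : AnalyticAt 𝕜 W₁ (φ x)) (hW₂ : AnalyticAt 𝕜 W₂ (φ x)) :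
    RelatedAt 𝕜 φ (VectorField.lieBracket 𝕜 V₁ V₂) (VectorField.lieBracket 𝕜 W₁ W₂) x := by
  filter_upwards [h₁, h₂, h₁.eventually_fderiv_apply hφ hV₁ hW₁,
    h₂.eventually_fderiv_apply hφ hV₂ hW₂, hφ.eventually_analyticAt] with y hy₁ hy₂ hd₁ hd₂ hφy
  have hsymm : IsSymmSndFDerivAt 𝕜 φ y := hφy.contDiffAt.isSymmSndFDerivAt_of_omega
  simp only [VectorField.lieBracket_eq, map_sub]
  rw [← hy₁, ← hy₂, ← hd₁, ← hd₂, hsymm.eq (V₁ y), add_sub_add_right_eq_sub]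

end RelatedAt

variable (𝕜) in
/-- A local analytic diffeomorphism, encoded as an open partial homeomorphism. -/
structure IsBianalytic (e : OpenPartialHomeomorph E F) : Prop where
  analyticOnNhd : AnalyticOnNhd 𝕜 e e.source
  analyticOnNhd_symm : AnalyticOnNhd 𝕜 e.symm e.target

variable (𝕜) in
/-- The image of the vector field `V` under `e`; meaningful on `e.target` only. -/
noncomputable def pushforward (e : OpenPartialHomeomorph E F) (V : E → E) (y : F) : F :=
  fderiv 𝕜 e (e.symm y) (V (e.symm y))

theorem relatedAt_pushforward (e : OpenPartialHomeomorph E F) (V : E → E) {x : E}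
    (hx : x ∈ e.source) : RelatedAt 𝕜 e V (pushforward 𝕜 e V) x := by
  filter_upwards [e.eventually_left_inverse hx] with y hy
  rw [pushforward, hy]

namespace IsBianalytic

variable {e : OpenPartialHomeomorph E F} {V : E → E} {x : E}

theorem fderiv_symm_apply_fderiv (he : IsBianalytic 𝕜 e) (hx : x ∈ e.source) (v : E) :
    fderiv 𝕜 e.symm (e x) (fderiv 𝕜 e x v) = v := by
  have hcomp := ((he.analyticOnNhd_symm _ (e.map_source hx)).differentiableAt.hasFDerivAt).comp x
    (he.analyticOnNhd _ hx).differentiableAt.hasFDerivAt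
  have hid := (hasFDerivAt_id (𝕜 := 𝕜) x).congr_of_eventuallyEq (e.eventually_left_inverse hx)
  exact congr($(hcomp.unique hid) v)

theorem relatedAt_symm {W : F → F} (he : IsBianalytic 𝕜 e) (hx : x ∈ e.source)
    (h : RelatedAt 𝕜 e V W x) : RelatedAt 𝕜 e.symm W V (e x) := by
  have hsymm : Tendsto e.symm (𝓝 (e x)) (𝓝 x) := by
    simpa [e.left_inv hx] using (e.continuousAt_symm (e.map_source hx)).tendsto
  filter_upwards [hsymm.eventually h, e.open_target.mem_nhds (e.map_source hx)] with y hy hyt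
  rw [e.right_inv hyt] at hy
  have := he.fderiv_symm_apply_fderiv (e.map_target hyt) (V (e.symm y))
  rwa [e.right_inv hyt, hy] at this

theorem analyticAt_pushforward [CompleteSpace F] (he : IsBianalytic 𝕜 e) (hx : x ∈ e.source)
    (hV : AnalyticAt 𝕜 V x) : AnalyticAt 𝕜 (pushforward 𝕜 e V) (e x) := by
  have hsymm := he.analyticOnNhd_symm _ (e.map_source hx)
  rw [← e.left_inv hx] at hV
  refine analyticAt_clm_apply (AnalyticAt.comp ?_ hsymm) (hV.comp hsymm)
  rw [e.left_inv hx]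
  exact (he.analyticOnNhd _ hx).fderiv

end IsBianalytic

theorem exists_isBianalytic_of_analyticAt [CompleteSpace E] [CompleteSpace F] {f : E → F} {x : E}
    {s : Set E} (hf : AnalyticAt 𝕜 f x) (hfx : (fderiv 𝕜 f x).IsInvertible) (hs : s ∈ 𝓝 x) :
    ∃ e : OpenPartialHomeomorph E F, ⇑e = f ∧ x ∈ e.source ∧ e.source ⊆ s ∧ IsBianalytic 𝕜 e := by
  obtain ⟨L, hL⟩ := hfx
  have hstrict : HasStrictFDerivAt f (L : E →L[𝕜] F) x := hL ▸ hf.hasStrictFDerivAt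
  have hinv : ∀ᶠ y in 𝓝 x, (fderiv 𝕜 f y).IsInvertible :=
    hf.fderiv.continuousAt.eventually (hL ▸ L.nhds)
  obtain ⟨t, ht, htopen, hxt⟩ := mem_nhds_iff.1
    (inter_mem hs (hf.eventually_analyticAt.and hinv))
  let e := (hstrict.toOpenPartialHomeomorph f).restrOpen t htopen
  have hsource : e.source ⊆ t := inter_subset_right
  refine ⟨e, rfl, ⟨hstrict.mem_toOpenPartialHomeomorph_source, hxt⟩,
    fun y hy => (ht (hsource hy)).1, fun y hy => (ht (hsource hy)).2.1, fun y hy => ?_⟩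
  obtain ⟨hfy, M, hM⟩ := (ht (hsource (e.map_target hy))).2
  exact e.analyticAt_symm hy hfy hM.symm

variable (𝕜) in
/-- A germ of analytic diffeomorphism of `(E, 0)` with identity linear part. -/
structure TangentToId (h : E → E) : Prop where
  analyticAt : AnalyticAt 𝕜 h 0
  map_zero : h 0 = 0
  fderiv_zero : fderiv 𝕜 h 0 = ContinuousLinearMap.id 𝕜 E

namespace TangentToId

variable {h : E → E}

theorem exists_isBianalytic [CompleteSpace E] (hh : TangentToId 𝕜 h) {s : Set E} (hs : s ∈ 𝓝 0) :
    ∃ e : OpenPartialHomeomorph E E, ⇑e = h ∧ 0 ∈ e.source ∧ e.source ⊆ s ∧ IsBianalytic 𝕜 e :=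
  exists_isBianalytic_of_analyticAt hh.analyticAt
    (hh.fderiv_zero ▸ ⟨.refl 𝕜 E, rfl⟩) hs

theorem symm {e : OpenPartialHomeomorph E E} (hh : TangentToId 𝕜 e) (he : IsBianalytic 𝕜 e)
    (h0e : 0 ∈ e.source) : TangentToId 𝕜 e.symm where
  analyticAt := by simpa only [hh.map_zero] using he.analyticOnNhd_symm _ (e.map_source h0e)
  map_zero := by simpa only [hh.map_zero] using e.left_inv h0e
  fderiv_zero := by
    ext1 v
    simpa [hh.map_zero, hh.fderiv_zero] using he.fderiv_symm_apply_fderiv h0e v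

theorem fderiv_eq_of_relatedAt [CompleteSpace E] {V W : E → E} (hh : TangentToId 𝕜 h)
    (hVW : RelatedAt 𝕜 h V W 0) (hV : AnalyticAt 𝕜 V 0) (hW : AnalyticAt 𝕜 W 0) (hV0 : V 0 = 0) :
    fderiv 𝕜 V 0 = fderiv 𝕜 W 0 := by
  ext v
  simpa [hh.map_zero, hh.fderiv_zero] using
    hVW.fderiv_apply_of_eq_zero hh.analyticAt hV (hh.map_zero.symm ▸ hW) hV0 v

end TangentToId

end RelatedVectorFields

section LinearAlgebra

theorem comp_semisimple_eq_of_comp_add_nilpotent_eq {K V V' : Type*} [Field K] [PerfectField K]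
    [AddCommGroup V] [Module K V] [AddCommGroup V'] [Module K V'] [FiniteDimensional K V']
    (e : V ≃ₗ[K] V') {s n : Module.End K V} {s' n' : Module.End K V'}
    (hs : s.IsSemisimple) (hn : IsNilpotent n) (hsn : Commute s n)
    (hs' : s'.IsSemisimple) (hn' : IsNilpotent n') (hsn' : Commute s' n')
    (h : e ∘ₗ (s + n) = (s' + n') ∘ₗ e) : e ∘ₗ s = s' ∘ₗ e := by
  let c := e.conjAlgEquiv K
  have hc (f : Module.End K V) : e ∘ₗ f = c f ∘ₗ e := by ext; simp [c]
  have hadd : c n + c s = n' + s' := by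
    rw [← map_add, add_comm n, add_comm n', ← LinearMap.cancel_right e.surjective, ← hc, h]
  have hcs : (c s).IsSemisimple := (LinearEquiv.isSemisimple_iff s (c s) e (hc s)).1 hs
  rw [hc, (Module.End.isNilpotent_isSemisimple_unique (hn.map c) hcs hn' hs' (hsn.symm.map c)
    hsn'.symm hadd).2]

variable {n : ℕ}

theorem diagCLM_apply (γ x : Fin n → ℂ) : diagCLM γ x = γ * x := by
  ext j
  simp [diagCLM, Matrix.mulVec_diagonal]

theorem diagCLM_single (γ : Fin n → ℂ) (j : Fin n) :
    diagCLM γ (Pi.single j 1) = γ j • (Pi.single j 1 : Fin n → ℂ) := by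
  ext i
  obtain rfl | hij := eq_or_ne i j <;> simp [diagCLM_apply, *]

theorem diagCLM_sum_smul {κ : Type*} (s : Finset κ) (α : κ → ℂ) (γ : κ → Fin n → ℂ) :
    diagCLM (∑ k ∈ s, α k • γ k) = ∑ k ∈ s, α k • diagCLM (γ k) := by
  ext x j
  simp [diagCLM_apply, Finset.sum_mul, mul_assoc]

theorem isSemisimple_diagCLM (γ : Fin n → ℂ) :
    Module.End.IsSemisimple (diagCLM γ : Module.End ℂ (Fin n → ℂ)) := by
  classical
  let p : Polynomial ℂ := ∏ a ∈ Finset.univ.image γ, (Polynomial.X - Polynomial.C a)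
  have hp : Squarefree p :=
    (Polynomial.separable_prod_X_sub_C_iff'.2 fun _ _ _ _ h => h).squarefree
  have hpγ : Polynomial.aeval γ p = 0 := by
    ext j
    rw [Polynomial.aeval_pi_apply₂, Polynomial.coe_aeval_eq_eval, Polynomial.eval_prod]
    exact Finset.prod_eq_zero (Finset.mem_image_of_mem γ (Finset.mem_univ j)) (by simp)
  let diagHom : (Fin n → ℂ) →ₐ[ℂ] Module.End ℂ (Fin n → ℂ) :=
    (Matrix.toLinAlgEquiv' : _ ≃ₐ[ℂ] _).toAlgHom.comp (Matrix.diagonalAlgHom ℂ)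
  refine Module.End.isSemisimple_of_squarefree_aeval_eq_zero hp ?_
  change Polynomial.aeval (diagHom γ) p = 0
  rw [Polynomial.aeval_algHom_apply, hpγ, map_zero]

end LinearAlgebra

section ToricLattice

variable {n : ℕ} {γ : Fin n → ℂ}

theorem coord_mem_qLattice (ℓ : Submodule.span ℤ (range γ) →ₗ[ℤ] ℤ) :
    (fun j => ℓ ⟨γ j, Submodule.subset_span (mem_range_self j)⟩) ∈ QLattice γ := by
  refine ⟨fun c hc => ?_, fun j k hjk => by simp only [hjk]⟩
  have hsum : ∑ j, c j • (⟨γ j, Submodule.subset_span (mem_range_self j)⟩ :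
      Submodule.span ℤ (range γ)) = 0 :=
    Subtype.ext (by simpa using hc.1)
  simpa only [map_sum, map_smul, smul_eq_mul, mul_comm, map_zero] using congrArg ℓ hsum

/-- The `ℤ`-module generated by the entries of `γ` is free, and the coordinates of `γ` in a basis
of it belong to the lattice. -/
theorem mem_span_qLattice (γ : Fin n → ℂ) :
    γ ∈ Submodule.span ℂ ((fun ρ j => (ρ j : ℂ)) '' QLattice γ) := by
  have : Module.Finite ℤ (Submodule.span ℤ (range γ)) := .span_of_finite ℤ (finite_range γ)
  let b := Module.Free.chooseBasis ℤ (Submodule.span ℤ (range γ))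
  let x (j : Fin n) : Submodule.span ℤ (range γ) :=
    ⟨γ j, Submodule.subset_span (mem_range_self j)⟩
  have hγ : ∑ i, (b i : ℂ) • (fun j => (b.coord i (x j) : ℂ)) = γ := by
    ext j
    simpa only [Submodule.coe_sum, Submodule.coe_smul, zsmul_eq_mul, Finset.sum_apply,
      Pi.smul_apply, smul_eq_mul, mul_comm, Module.Basis.coord_apply]
      using congrArg Subtype.val (b.sum_repr (x j))
  have hmem : ∑ i, (b i : ℂ) • (fun j => (b.coord i (x j) : ℂ)) ∈
      Submodule.span ℂ ((fun ρ j => (ρ j : ℂ)) '' QLattice γ) :=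
    Submodule.sum_mem _ fun i _ => Submodule.smul_mem _ _
      (Submodule.subset_span ⟨_, coord_mem_qLattice (b.coord i), rfl⟩)
  rwa [hγ] at hmem

theorem mem_span_of_qLattice_subset_span {κ : Type*} {ρ : κ → Fin n → ℤ}
    (hρ : QLattice γ ⊆ Submodule.span ℤ (range ρ)) :
    γ ∈ Submodule.span ℂ (range fun k j => (ρ k j : ℂ)) := by
  let cast : (Fin n → ℤ) →ₗ[ℤ] Fin n → ℂ := (Int.castAddHom ℂ).toIntLinearMap.compLeft (Fin n)
  have hcast : (Submodule.span ℤ (range ρ)).map cast ≤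
      (Submodule.span ℂ (range fun k j => (ρ k j : ℂ))).restrictScalars ℤ := by
    rw [Submodule.map_span, ← range_comp]
    exact Submodule.span_le_restrictScalars ℤ ℂ _
  refine Submodule.span_le.2 ?_ (mem_span_qLattice γ)
  rintro _ ⟨σ, hσ, rfl⟩
  exact hcast ⟨σ, hρ hσ, rfl⟩

theorem sum_eq_of_mem_qLattice {ρ : Fin n → ℤ} (hρ : ρ ∈ QLattice γ) {k : ℕ} (hk : k ≠ 0)
    (v : Fin k → Fin n) (j : Fin n) (h : ∑ m, γ (v m) = γ j) : ∑ m, ρ (v m) = ρ j := by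
  have hk' : k = 1 ∨ 1 < k := by omega
  rcases hk' with rfl | hk'
  · simpa using hρ.2 (v 0) j (by simpa using h)
  let c (i : Fin n) : ℤ := (∑ m, if i = v m then 1 else 0) - if i = j then 1 else 0
  have hc {R : Type} [CommRing R] (σ : Fin n → R) :
      ∑ i, (c i : R) * σ i = ∑ m, σ (v m) - σ j := by
    simp only [c, Int.cast_sub, Int.cast_sum, sub_mul, Finset.sum_mul, Finset.sum_sub_distrib]
    rw [Finset.sum_comm]
    simp
  have hcount (i : Fin n) : (0 : ℤ) ≤ ∑ m, if i = v m then 1 else 0 :=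
    Finset.sum_nonneg fun m _ => by split_ifs <;> simp
  have hneg {i : Fin n} (hi : c i < 0) : i = j := by
    by_contra hij
    exact (hcount i).not_gt (by simpa [c, hij] using hi)
  have hres : IsResonanceRelation γ c := by
    refine ⟨by rw [hc, h, sub_self], fun i => ?_, ?_,
      fun i l hi hl => (hneg hi).trans (hneg hl).symm⟩
    · have := hcount i
      simp only [c]
      split_ifs <;> omega
    · have := hc (fun _ => (1 : ℤ))
      simp only [Int.cast_eq, mul_one, Finset.sum_const, Finset.card_univ, Fintype.card_fin,
        Int.nsmul_eq_mul] at this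
      omega
  have := hρ.1 c hres
  simp_rw [mul_comm (ρ _)] at this
  exact sub_eq_zero.1 ((hc ρ).symm.trans (by simpa using this))

end ToricLattice

section EulerOperator

variable {𝕜 : Type*} [NontriviallyNormedField 𝕜]
  {E F : Type*} [NormedAddCommGroup E] [NormedSpace 𝕜 E] [NormedAddCommGroup F] [NormedSpace 𝕜 F]

theorem iteratedFDeriv_succ_apply_fderiv [CompleteSpace F] {f : E → F} {x : E}
    (hf : AnalyticAt 𝕜 f x) {k : ℕ} (v : Fin (k + 1) → E) :
    iteratedFDeriv 𝕜 (k + 1) f x v =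
      iteratedFDeriv 𝕜 k (fun y => fderiv 𝕜 f y (v (Fin.last k))) x (Fin.init v) := by
  have := (ContinuousLinearMap.apply 𝕜 F (v (Fin.last k))).iteratedFDeriv_comp_left
    (hf.fderiv.contDiffAt (n := k)) le_rfl
  rw [iteratedFDeriv_succ_apply_right]
  exact congr($this (Fin.init v)).symm

theorem eventually_eq_zero_of_iteratedFDeriv_eq_zero [CharZero 𝕜] [CompleteSpace F] {f : E → F}
    {x : E} (hf : AnalyticAt 𝕜 f x) (h : ∀ k, iteratedFDeriv 𝕜 k f x = 0) : f =ᶠ[𝓝 x] 0 := by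
  obtain ⟨p, r, hp⟩ := hf
  filter_upwards [Metric.eball_mem_nhds x hp.r_pos] with y hy
  have hsum := hp.hasSum_iteratedFDeriv (y := y - x) (by simpa [edist_eq_enorm_sub] using hy)
  simp only [h, zero_apply, smul_zero, add_sub_cancel] at hsum
  exact hsum.unique hasSum_zero

/-- Differentiating along an eigenvector of `A` with eigenvalue `μ` shifts the eigenvalues of the
Euler operator `f ↦ Df(x)(A x)` by `-μ`. -/
theorem fderiv_fderiv_sub_smul_apply [CompleteSpace E] [CompleteSpace F] {f : E → F} {x : E}
    (hf : AnalyticAt 𝕜 f x) {A : E →L[𝕜] E} {v : E} {μ : 𝕜} (hv : A v = μ • v) (a : 𝕜) :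
    (fun y => fderiv 𝕜 (fun z => fderiv 𝕜 f z (A z) - a • f z) y v) =ᶠ[𝓝 x]
      fun y => fderiv 𝕜 (fun z => fderiv 𝕜 f z v) y (A y) - (a - μ) • fderiv 𝕜 f y v := by
  filter_upwards [hf.eventually_analyticAt] with y hy
  have hsymm : IsSymmSndFDerivAt 𝕜 f y := hy.contDiffAt.isSymmSndFDerivAt_of_omega
  have hd := hy.fderiv.differentiableAt.hasFDerivAt
  have hleft := (hd.clm_apply A.hasFDerivAt).fun_sub
    (hy.differentiableAt.hasFDerivAt.fun_const_smul a)
  have hright := hd.clm_apply (hasFDerivAt_const v y)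
  rw [hleft.fderiv, hright.fderiv]
  simp only [sub_apply, add_apply, ContinuousLinearMap.comp_apply, hv, map_smul,
    ContinuousLinearMap.flip_apply, hsymm.eq v, smul_apply, ContinuousLinearMap.comp_zero, zero_add,
    sub_smul]
  abel

theorem iteratedFDeriv_fderiv_sub_smul [CompleteSpace E] [CompleteSpace F] {f : E → F}
    (hf : AnalyticAt 𝕜 f 0) {A : E →L[𝕜] E} {k : ℕ} {v : Fin k → E} {μ : Fin k → 𝕜}
    (hv : ∀ m, A (v m) = μ m • v m) (a : 𝕜) :
    iteratedFDeriv 𝕜 k (fun x => fderiv 𝕜 f x (A x) - a • f x) 0 v =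
      (∑ m, μ m - a) • iteratedFDeriv 𝕜 k f 0 v := by
  induction k generalizing f a with
  | zero => simp
  | succ k ih =>
    have han : AnalyticAt 𝕜 (fun x => fderiv 𝕜 f x (A x) - a • f x) 0 :=
      (analyticAt_clm_apply hf.fderiv (A.analyticAt 0)).sub (analyticAt_const.smul hf)
    rw [iteratedFDeriv_succ_apply_fderiv han, iteratedFDeriv_succ_apply_fderiv hf,
      (fderiv_fderiv_sub_smul_apply hf (hv _) a).iteratedFDeriv 𝕜 k |>.self_of_nhds,
      ih (v := Fin.init v) (analyticAt_clm_apply hf.fderiv analyticAt_const) fun m => hv m.castSucc,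
      Fin.sum_univ_castSucc]
    congr 1
    ring

/-- If `A` and `B` are diagonal in the basis `b` with entries `γ` and `σ`, then `f` is a series of
monomials of weight `a` for `γ`, each of which has weight `c` for `σ`. -/
theorem eventually_fderiv_eq_smul_of_weights [CharZero 𝕜] [CompleteSpace E] [CompleteSpace F]
    {ι : Type*} [Finite ι] (b : Module.Basis ι 𝕜 E) {A B : E →L[𝕜] E} {γ σ : ι → 𝕜}
    (hA : ∀ i, A (b i) = γ i • b i) (hB : ∀ i, B (b i) = σ i • b i) {a c : 𝕜}
    (hw : ∀ (k : ℕ) (v : Fin k → ι), k ≠ 0 → ∑ m, γ (v m) = a → ∑ m, σ (v m) = c)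
    {f : E → F} (hf : AnalyticAt 𝕜 f 0) (hf0 : f 0 = 0)
    (hfA : ∀ᶠ x in 𝓝 0, fderiv 𝕜 f x (A x) = a • f x) :
    ∀ᶠ x in 𝓝 0, fderiv 𝕜 f x (B x) = c • f x := by
  have hzero (k : ℕ) : iteratedFDeriv 𝕜 k (fun x => fderiv 𝕜 f x (A x) - a • f x) 0 = 0 := by
    have hfA' : (fun x => fderiv 𝕜 f x (A x) - a • f x) =ᶠ[𝓝 0] fun _ => 0 :=
      hfA.mono fun x hx => sub_eq_zero.2 hx
    rw [(hfA'.iteratedFDeriv 𝕜 k).self_of_nhds, iteratedFDeriv_fun_zero, Pi.zero_apply]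
  have han : AnalyticAt 𝕜 (fun x => fderiv 𝕜 f x (B x) - c • f x) 0 :=
    (analyticAt_clm_apply hf.fderiv (B.analyticAt 0)).sub (analyticAt_const.smul hf)
  refine (eventually_eq_zero_of_iteratedFDeriv_eq_zero han fun k => ?_).mono
    fun x hx => sub_eq_zero.1 hx
  refine ContinuousMultilinearMap.toMultilinearMap_injective
    (Module.Basis.ext_multilinear (fun _ => b) fun v => ?_)
  have hweight := iteratedFDeriv_fderiv_sub_smul hf (fun m => hA (v m)) a
  have hgoal := iteratedFDeriv_fderiv_sub_smul hf (fun m => hB (v m)) c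
  rw [hzero, zero_apply, eq_comm, smul_eq_zero, sub_eq_zero] at hweight
  refine hgoal.trans ?_
  rcases hweight with hweight | hweight
  · rcases eq_or_ne k 0 with rfl | hk
    · simp [hf0]
    · simp [hw k v hk hweight]
  · simp [hweight]

end EulerOperator

section NormalForm

open VectorField

variable {n : ℕ}

theorem relatedAt_clm {𝕜 E F : Type*} [NontriviallyNormedField 𝕜] [NormedAddCommGroup E]
    [NormedSpace 𝕜 E] [NormedAddCommGroup F] [NormedSpace 𝕜 F] (A : E →L[𝕜] F) {V : E → E}
    {W : F → F} (h : ∀ y, A (V y) = W (A y)) (x : E) : RelatedAt 𝕜 A V W x :=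
  .of_forall fun y => by rw [A.fderiv, h]

theorem lieBracket_clm_right {𝕜 E : Type*} [NontriviallyNormedField 𝕜] [NormedAddCommGroup E]
    [NormedSpace 𝕜 E] (V : E → E) (A : E →L[𝕜] E) (x : E) :
    lieBracket 𝕜 V A x = A (V x) - fderiv 𝕜 V x (A x) := by
  rw [lieBracket, A.fderiv]

theorem RelatedAt.fderiv_apply_of_isSemisimple {𝕂 : Type*} [NontriviallyNormedField 𝕂]
    [CompleteSpace 𝕂] [PerfectField 𝕂] {X Y φ : (Fin n → 𝕂) → Fin n → 𝕂}
    (hYX : RelatedAt 𝕂 φ Y X 0) (hφ : AnalyticAt 𝕂 φ 0) (hφ0 : φ 0 = 0)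
    (hbij : Function.Bijective (fderiv 𝕂 φ 0)) (hY : AnalyticAt 𝕂 Y 0) (hY0 : Y 0 = 0)
    (hX : AnalyticAt 𝕂 X 0) {S N S' N' : (Fin n → 𝕂) →L[𝕂] Fin n → 𝕂}
    (hX' : fderiv 𝕂 X 0 = S + N) (hS : Module.End.IsSemisimple (S : Module.End 𝕂 (Fin n → 𝕂)))
    (hN : IsNilpotent (N : Module.End 𝕂 (Fin n → 𝕂))) (hSN : S ∘L N = N ∘L S)
    (hY' : fderiv 𝕂 Y 0 = S' + N') (hS' : Module.End.IsSemisimple (S' : Module.End 𝕂 (Fin n → 𝕂)))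
    (hN' : IsNilpotent (N' : Module.End 𝕂 (Fin n → 𝕂))) (hSN' : S' ∘L N' = N' ∘L S')
    (v : Fin n → 𝕂) : fderiv 𝕂 φ 0 (S' v) = S (fderiv 𝕂 φ 0 v) := by
  refine LinearMap.congr_fun (comp_semisimple_eq_of_comp_add_nilpotent_eq
    (.ofBijective (fderiv 𝕂 φ 0 : (Fin n → 𝕂) →ₗ[𝕂] Fin n → 𝕂) hbij) (n := N') (n' := N)
    hS' hN' (LinearMap.ext fun v => congr($hSN' v)) hS hN
    (LinearMap.ext fun v => congr($hSN v)) (LinearMap.ext fun v => ?_)) v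
  have := hYX.fderiv_apply_of_eq_zero hφ hY (hφ0.symm ▸ hX) hY0 v
  rwa [hφ0, hX', hY'] at this

theorem AdmitsPDNormalization.exists_tangentToId {𝕂 : Type*} [NontriviallyNormedField 𝕂]
    [CompleteSpace 𝕂] [PerfectField 𝕂] {X : (Fin n → 𝕂) → Fin n → 𝕂} (h : AdmitsPDNormalization 𝕂 X)
    (hX : AnalyticAt 𝕂 X 0) {S N : (Fin n → 𝕂) →L[𝕂] Fin n → 𝕂} (hJC : fderiv 𝕂 X 0 = S + N)
    (hS : Module.End.IsSemisimple (S : Module.End 𝕂 (Fin n → 𝕂)))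
    (hN : IsNilpotent (N : Module.End 𝕂 (Fin n → 𝕂))) (hSN : S ∘L N = N ∘L S) :
    ∃ Y φ : (Fin n → 𝕂) → Fin n → 𝕂, AnalyticAt 𝕂 Y 0 ∧ Y 0 = 0 ∧ TangentToId 𝕂 φ ∧
      RelatedAt 𝕂 φ Y X 0 ∧ ∀ᶠ x in 𝓝 0, lieBracket 𝕂 Y S x = 0 := by
  obtain ⟨U, Y, φ, hUo, h0U, hY, hφ, hY0, hφ0, hbij, ⟨S', N', hJC', hS', hN', hSN', hbr⟩, hrel⟩ := h
  have hU : U ∈ 𝓝 0 := hUo.mem_nhds h0U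
  have hφY : RelatedAt 𝕂 φ Y X 0 := by filter_upwards [hU] with x hx using hrel x hx
  have hAS := hφY.fderiv_apply_of_isSemisimple (hφ 0 h0U) hφ0 hbij (hY 0 h0U) hY0 hX hJC hS hN hSN
    hJC' hS' hN' hSN'
  obtain ⟨A, hA⟩ : ∃ A, fderiv 𝕂 φ 0 = A := ⟨_, rfl⟩
  rw [hA] at hAS hbij
  obtain ⟨B, hAB, hBA⟩ : ∃ B : (Fin n → 𝕂) →L[𝕂] Fin n → 𝕂, (∀ v, A (B v) = v) ∧
      ∀ v, B (A v) = v :=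
    let A' : (Fin n → 𝕂) ≃L[𝕂] Fin n → 𝕂 :=
      .ofBijective A (LinearMap.ker_eq_bot.2 hbij.1) (LinearMap.range_eq_top.2 hbij.2)
    ⟨A'.symm, A'.apply_symm_apply, A'.symm_apply_apply⟩
  have hB0 : Tendsto B (𝓝 0) (𝓝 0) := by simpa using B.continuous.tendsto 0
  have hAY : AnalyticAt 𝕂 (A ∘ Y ∘ B) 0 :=
    (A.analyticAt _).comp ((hY 0 h0U).comp_of_eq (B.analyticAt 0) (map_zero B))
  have hφB : RelatedAt 𝕂 (φ ∘ B) (A ∘ Y ∘ B) X 0 := by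
    refine RelatedAt.comp (W := Y) ?_ (relatedAt_clm B (by simp [hBA]) 0) ?_
      (.of_forall fun y => B.differentiableAt)
    · simpa using hφY
    · simpa using (hφ 0 h0U).eventually_analyticAt.mono fun y hy => hy.differentiableAt
  refine ⟨A ∘ Y ∘ B, φ ∘ B, hAY, by simp [hY0],
    ⟨(hφ 0 h0U).comp_of_eq (B.analyticAt 0) (map_zero B), by simp [hφ0], ?_⟩, hφB, ?_⟩
  · rw [fderiv_comp _ (by simpa using (hφ 0 h0U).differentiableAt) B.differentiableAt, map_zero,
      hA, B.fderiv]
    ext1 v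
    exact hAB v
  · have hAbr := (relatedAt_clm A (V := Y) (W := A ∘ Y ∘ B) (by simp [hBA]) 0).lieBracket
      (relatedAt_clm A (V := S') (W := S) hAS 0) (A.analyticAt 0) (hY 0 h0U) (S'.analyticAt 0)
      (by simpa using hAY) (S.analyticAt _)
    filter_upwards [hB0.eventually hAbr, hB0.eventually hU] with x hx hxU
    simpa [hbr _ hxU, hAB] using hx.symm

theorem eventually_lieBracket_diagCLM_of_mem_qLattice {Y : (Fin n → ℂ) → Fin n → ℂ}
    (hY : AnalyticAt ℂ Y 0) (hY0 : Y 0 = 0) {γ : Fin n → ℂ}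
    (hYγ : ∀ᶠ x in 𝓝 0, lieBracket ℂ Y (diagCLM γ) x = 0) {ρ : Fin n → ℤ} (hρ : ρ ∈ QLattice γ) :
    ∀ᶠ x in 𝓝 0, lieBracket ℂ Y (diagCLM fun j => (ρ j : ℂ)) x = 0 := by
  have hfderiv (j : Fin n) : ∀ᶠ x in 𝓝 0,
      fderiv ℂ (fun y => Y y j) x = .proj j ∘L fderiv ℂ Y x := by
    filter_upwards [hY.eventually_analyticAt] with x hx
    exact (hasFDerivAt_pi'.1 hx.differentiableAt.hasFDerivAt j).fderiv
  have hj (j : Fin n) : ∀ᶠ x in 𝓝 0,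
      fderiv ℂ (fun y => Y y j) x (diagCLM (fun j => (ρ j : ℂ)) x) = (ρ j : ℂ) • Y x j := by
    refine eventually_fderiv_eq_smul_of_weights (Pi.basisFun ℂ (Fin n)) (A := diagCLM γ) (a := γ j)
      (by simpa using diagCLM_single γ) (by simpa using diagCLM_single _) (fun k v hk hv => ?_)
      (analyticAt_pi_iff.1 hY j) (congrFun hY0 j) ?_
    · exact_mod_cast sum_eq_of_mem_qLattice hρ hk v j hv
    · filter_upwards [hYγ, hfderiv j] with x hx hxj
      rw [lieBracket_clm_right, sub_eq_zero, diagCLM_apply] at hx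
      rw [hxj, ContinuousLinearMap.comp_apply, ← hx]
      rfl
  filter_upwards [eventually_all.2 hj, eventually_all.2 hfderiv] with x hx hxj
  rw [lieBracket_clm_right, sub_eq_zero]
  ext j
  have := hx j
  rw [hxj] at this
  rw [diagCLM_apply]
  exact this.symm

theorem lieBracket_diagCLM_eq_zero_of_mem_qLattice {Y : (Fin n → ℂ) → Fin n → ℂ}
    {U : Set (Fin n → ℂ)} (hU : IsPreconnected U) (h0U : 0 ∈ U) (hY : AnalyticOnNhd ℂ Y U)
    (hY0 : Y 0 = 0) {γ : Fin n → ℂ} (hYγ : ∀ᶠ x in 𝓝 0, lieBracket ℂ Y (diagCLM γ) x = 0)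
    {ρ : Fin n → ℤ} (hρ : ρ ∈ QLattice γ) {x : Fin n → ℂ} (hx : x ∈ U) :
    lieBracket ℂ Y (diagCLM fun j => (ρ j : ℂ)) x = 0 := by
  have han : AnalyticOnNhd ℂ (lieBracket ℂ Y (diagCLM fun j => (ρ j : ℂ))) U := fun y hy => by
    rw [funext (lieBracket_clm_right Y _)]
    exact ((ContinuousLinearMap.analyticAt _ _).comp (hY y hy)).sub
      (analyticAt_clm_apply (hY y hy).fderiv (ContinuousLinearMap.analyticAt _ _))
  exact han.eqOn_zero_of_preconnected_of_eventuallyEq_zero hU h0U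
    (eventually_lieBracket_diagCLM_of_mem_qLattice (hY 0 h0U) hY0 hYγ hρ) hx

end NormalForm

section TorusAction

open VectorField

/-- The vector field `i • V` integrates to an action of the circle `ℝ / 2πℤ` on `U`. -/
def HasPeriodicFlow {E : Type*} [NormedAddCommGroup E] [NormedSpace ℂ E]
    (V : E → E) (U : Set E) : Prop :=
  ∀ x ∈ U, ∃ c : ℝ → E, (∀ t, c t ∈ U) ∧ c 0 = x ∧
    (∀ t : ℝ, HasDerivAt c (Complex.I • V (c t)) t) ∧ ∀ t : ℝ, c (t + 2 * Real.pi) = c t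

/-- `X` is preserved by a holomorphic torus action near `0` with the weights `ρ k`, given by its
commuting generators `V k`. -/
def AdmitsTorusAction {n : ℕ} {κ : Type*} (X : (Fin n → ℂ) → Fin n → ℂ) (ρ : κ → Fin n → ℤ) :
    Prop :=
  ∃ U : Set (Fin n → ℂ), IsOpen U ∧ (0 : Fin n → ℂ) ∈ U ∧
    ∃ V : κ → (Fin n → ℂ) → (Fin n → ℂ),
      (∀ k, AnalyticOnNhd ℂ (V k) U) ∧
      (∀ k, V k 0 = 0 ∧ fderiv ℂ (V k) 0 = diagCLM (fun j => (ρ k j : ℂ))) ∧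
      (∀ j k, ∀ x ∈ U, lieBracket ℂ (V j) (V k) x = 0) ∧
      (∀ k, ∀ x ∈ U, lieBracket ℂ X (V k) x = 0) ∧
      ∀ k, HasPeriodicFlow (V k) U

theorem HasPeriodicFlow.pushforward {E : Type*} [NormedAddCommGroup E] [NormedSpace ℂ E]
    {V : E → E} {U : Set E} (h : HasPeriodicFlow V U) {e : OpenPartialHomeomorph E E}
    (he : IsBianalytic ℂ e) (hU : U ⊆ e.source) : HasPeriodicFlow (pushforward ℂ e V) (e '' U) := by
  rintro _ ⟨x, hx, rfl⟩
  obtain ⟨c, hcU, rfl, hc, hper⟩ := h x hx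
  refine ⟨e ∘ c, fun t => mem_image_of_mem e (hcU t), rfl, fun t => ?_,
    fun t => congrArg e (hper t)⟩
  have := (he.analyticOnNhd _ (hU (hcU t))).differentiableAt.hasFDerivAt.restrictScalars ℝ
  convert this.comp_hasDerivAt t (hc t) using 1
  simp [_root_.pushforward, e.left_inv (hU (hcU t))]

theorem hasPeriodicFlow_diagCLM_ball {n : ℕ} (ρ : Fin n → ℤ) (ε : ℝ) :
    HasPeriodicFlow (diagCLM fun j => (ρ j : ℂ)) (Metric.ball 0 ε) := by
  intro x hx
  let c (t : ℝ) (j : Fin n) : ℂ := Complex.exp (t * (ρ j * Complex.I)) * x j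
  refine ⟨c, fun t => ?_, by ext; simp [c], fun t => ?_, fun t => ?_⟩
  · have hnorm (j : Fin n) : ‖c t j‖₊ = ‖x j‖₊ := by
      rw [← NNReal.coe_inj, coe_nnnorm, coe_nnnorm, norm_mul, ← mul_assoc, ← Complex.ofReal_intCast,
        ← Complex.ofReal_mul, Complex.norm_exp_ofReal_mul_I, one_mul]
    rw [mem_ball_zero_iff] at hx ⊢
    rwa [Pi.norm_def, Finset.sup_congr rfl fun j _ => hnorm j, ← Pi.norm_def]
  · rw [hasDerivAt_pi]
    intro j
    have hd := ((Complex.ofRealCLM.hasDerivAt (x := t)).mul_const (ρ j * Complex.I)).cexp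
    refine (hd.mul_const (x j)).congr_deriv ?_
    simp only [diagCLM_apply, c, Pi.smul_apply, Pi.mul_apply, smul_eq_mul, Complex.ofRealCLM_apply,
      Complex.ofReal_one]
    ring
  · ext j
    have : ((t + 2 * Real.pi : ℝ) : ℂ) * (ρ j * Complex.I) =
        t * (ρ j * Complex.I) + ρ j * (2 * Real.pi * Complex.I) := by
      push_cast
      ring
    simp only [c, this, Complex.exp_periodic.int_mul (ρ j) _]

theorem lieBracket_diagCLM {n : ℕ} (γ σ x : Fin n → ℂ) :
    lieBracket ℂ (diagCLM γ) (diagCLM σ) x = 0 := by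
  simp [lieBracket_clm_right, diagCLM_apply, mul_left_comm]

theorem admitsTorusAction_of_isBianalytic {n : ℕ} {κ : Type*} {X Y : (Fin n → ℂ) → Fin n → ℂ}
    {ρ : κ → Fin n → ℤ} {e : OpenPartialHomeomorph (Fin n → ℂ) (Fin n → ℂ)}
    (he : IsBianalytic ℂ e) (h_id : TangentToId ℂ e) {ε : ℝ} (hε : 0 < ε)
    (hball : Metric.ball 0 ε ⊆ e.source) (hY : AnalyticOnNhd ℂ Y (Metric.ball 0 ε))
    (hX : ∀ x ∈ Metric.ball 0 ε, AnalyticAt ℂ X (e x))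
    (hYX : ∀ x ∈ Metric.ball 0 ε, RelatedAt ℂ e Y X x)
    (hYρ : ∀ k, ∀ x ∈ Metric.ball 0 ε, lieBracket ℂ Y (diagCLM fun j => (ρ k j : ℂ)) x = 0) :
    AdmitsTorusAction X ρ := by
  have h0 : (0 : Fin n → ℂ) ∈ Metric.ball 0 ε := Metric.mem_ball_self hε
  let L (k : κ) : (Fin n → ℂ) →L[ℂ] Fin n → ℂ := diagCLM fun j => (ρ k j : ℂ)
  let V (k : κ) := pushforward ℂ e (L k)
  have hLV (k : κ) {x} (hx : x ∈ Metric.ball 0 ε) : RelatedAt ℂ e (L k) (V k) x :=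
    relatedAt_pushforward e (L k) (hball hx)
  have hV (k : κ) {x} (hx : x ∈ Metric.ball 0 ε) : AnalyticAt ℂ (V k) (e x) :=
    he.analyticAt_pushforward (hball hx) ((L k).analyticAt x)
  refine ⟨e '' Metric.ball 0 ε, e.isOpen_image_of_subset_source Metric.isOpen_ball hball,
    ⟨0, h0, h_id.map_zero⟩, V, fun k => ?_, fun k => ⟨?_, ?_⟩, fun j k => ?_, fun k => ?_, fun k =>
      (hasPeriodicFlow_diagCLM_ball (ρ k) ε).pushforward he hball⟩
  · rintro _ ⟨x, hx, rfl⟩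
    exact hV k hx
  · simpa [h_id.map_zero] using (hLV k h0).self_of_nhds.symm
  · have := h_id.fderiv_eq_of_relatedAt (hLV k h0) ((L k).analyticAt 0) (h_id.map_zero ▸ hV k h0)
      (map_zero _)
    rw [← this, (L k).fderiv]
  · rintro _ ⟨x, hx, rfl⟩
    have := ((hLV j hx).lieBracket (hLV k hx) (he.analyticOnNhd x (hball hx)) ((L j).analyticAt x)
      ((L k).analyticAt x) (hV j hx) (hV k hx)).self_of_nhds
    rw [← this, lieBracket_diagCLM, map_zero]
  · rintro _ ⟨x, hx, rfl⟩
    have := ((hYX x hx).lieBracket (hLV k hx) (he.analyticOnNhd x (hball hx)) (hY x hx)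
      ((L k).analyticAt x) (hX x hx) (hV k hx)).self_of_nhds
    rw [← this, hYρ k x hx, map_zero]

theorem AdmitsPDNormalization.admitsTorusAction {n : ℕ} {κ : Type*}
    {X : (Fin n → ℂ) → Fin n → ℂ} (h : AdmitsPDNormalization ℂ X) (hX : AnalyticAt ℂ X 0)
    {γ : Fin n → ℂ} {N : (Fin n → ℂ) →L[ℂ] Fin n → ℂ} (hJC : fderiv ℂ X 0 = diagCLM γ + N)
    (hN : IsNilpotent (N : Module.End ℂ (Fin n → ℂ)))
    (hγN : diagCLM γ ∘L N = N ∘L diagCLM γ) {ρ : κ → Fin n → ℤ} (hρ : ∀ k, ρ k ∈ QLattice γ) :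
    AdmitsTorusAction X ρ := by
  obtain ⟨Y, φ, hY, hY0, hφ, hYX, hYγ⟩ :=
    h.exists_tangentToId hX hJC (isSemisimple_diagCLM γ) hN hγN
  obtain ⟨e, rfl, h0e, hes, he⟩ := hφ.exists_isBianalytic
    (inter_mem (inter_mem hY.eventually_analyticAt (eventually_eventually_nhds.2 hYX))
      (hφ.analyticAt.continuousAt.eventually (hφ.map_zero.symm ▸ hX).eventually_analyticAt))
  obtain ⟨ε, hε, hball⟩ := Metric.mem_nhds_iff.1 (e.open_source.mem_nhds h0e)
  have hY_ball : AnalyticOnNhd ℂ Y (Metric.ball 0 ε) := fun x hx => (hes (hball hx)).1.1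
  exact admitsTorusAction_of_isBianalytic he hφ hε hball hY_ball (fun x hx => (hes (hball hx)).2)
    (fun x hx => (hes (hball hx)).1.2) fun k x hx =>
      lieBracket_diagCLM_eq_zero_of_mem_qLattice (convex_ball 0 ε).isPreconnected
        (Metric.mem_ball_self hε) hY_ball hY0 hYγ (hρ k) hx

end TorusAction

section Superposition

open ContinuousMap

variable {𝕜 : Type*} [NontriviallyNormedField 𝕜] {K : Type*} [TopologicalSpace K]
  {E F : Type*} [NormedAddCommGroup E] [NormedSpace 𝕜 E] [NormedAddCommGroup F] [NormedSpace 𝕜 F]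

/-- The operator `c ↦ f ∘ c` on spaces of continuous maps, with the junk value `0` where `f ∘ c` is
not continuous. -/
noncomputable def superposition (f : E → F) (c : C(K, E)) : C(K, F) :=
  open scoped Classical in if h : Continuous (f ∘ c) then ⟨f ∘ c, h⟩ else 0

theorem superposition_apply {f : E → F} {c : C(K, E)} (h : Continuous (f ∘ c)) (t : K) :
    superposition f c t = f (c t) := by
  rw [superposition, dif_pos h, coe_mk, Function.comp_apply]

theorem superposition_zero {f : E → F} (hf0 : f 0 = 0) :
    superposition f (0 : C(K, E)) = 0 := by
  have hcomp : f ∘ (0 : C(K, E)) = fun _ => 0 := funext fun _ => hf0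
  ext1 t
  exact (superposition_apply (hcomp ▸ continuous_const) t).trans hf0

theorem update_continuousMap_apply {ι : Type*} [DecidableEq ι] (c : ι → C(K, E)) (i : ι)
    (z : C(K, E)) (t : K) :
    (fun j => Function.update c i z j t) = Function.update (fun j => c j t) i (z t) :=
  funext fun j => Function.apply_update (fun _ (w : C(K, E)) => w t) c i z j

variable [CompactSpace K]

theorem eventually_forall_apply {p : E → Prop} (hp : ∀ᶠ x in 𝓝 0, p x) :
    ∀ᶠ c : C(K, E) in 𝓝 0, ∀ t, p (c t) := by
  obtain ⟨ε, hε, hball⟩ := Metric.eventually_nhds_iff_ball.1 hp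
  filter_upwards [Metric.ball_mem_nhds (0 : C(K, E)) hε] with c hc t
  rw [mem_ball_zero_iff] at hc
  exact hball _ (mem_ball_zero_iff.2 ((c.norm_coe_le_norm t).trans_lt hc))

theorem eventually_superposition_apply {f : E → F} (hf : ∀ᶠ x in 𝓝 0, ContinuousAt f x) :
    ∀ᶠ c : C(K, E) in 𝓝 0, ∀ t, superposition f c t = f (c t) := by
  filter_upwards [eventually_forall_apply hf] with c hc t
  exact superposition_apply
    (continuous_iff_continuousAt.2 fun s => (hc s).comp c.continuous.continuousAt) t

/-- The pointwise action of a continuous multilinear map on continuous maps. -/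
noncomputable def pointwiseMultilinear {ι : Type*} [Fintype ι]
    (p : ContinuousMultilinearMap 𝕜 (fun _ : ι => E) F) :
    ContinuousMultilinearMap 𝕜 (fun _ : ι => C(K, E)) C(K, F) :=
  MultilinearMap.mkContinuous
    { toFun c := ⟨fun t => p fun i => c i t, by fun_prop⟩
      map_update_add' c i x y := by ext t; simp [update_continuousMap_apply]
      map_update_smul' c i a x := by ext t; simp [update_continuousMap_apply] }
    ‖p‖ fun c => (norm_le _ (by positivity)).2 fun t => (p.le_opNorm _).trans <| by
      gcongr
      exact norm_coe_le_norm _ _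

theorem norm_pointwiseMultilinear_le {ι : Type*} [Fintype ι]
    (p : ContinuousMultilinearMap 𝕜 (fun _ : ι => E) F) :
    ‖(pointwiseMultilinear p : ContinuousMultilinearMap 𝕜 (fun _ : ι => C(K, E)) C(K, F))‖ ≤ ‖p‖ :=
  MultilinearMap.mkContinuous_norm_le _ (norm_nonneg p) _

variable [CompleteSpace F]

theorem analyticAt_superposition {f : E → F} (hf : AnalyticAt 𝕜 f 0) :
    AnalyticAt 𝕜 (superposition f : C(K, E) → C(K, F)) 0 := by
  obtain ⟨p, R, hp⟩ := id hf
  let P : FormalMultilinearSeries 𝕜 C(K, E) C(K, F) := fun m => pointwiseMultilinear (p m)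
  have hP : p.radius ≤ P.radius :=
    FormalMultilinearSeries.radius_le_of_le fun m => norm_pointwiseMultilinear_le (p m)
  have hR : 0 < P.radius := (hp.r_pos.trans_le hp.r_le).trans_le hP
  refine (P.hasFPowerSeriesOnBall hR).analyticAt.congr ?_
  filter_upwards [Metric.eball_mem_nhds _ hp.r_pos,
    eventually_superposition_apply hf.eventually_continuousAt] with c hc hcf
  ext1 t
  have hct : c t ∈ Metric.eball (0 : E) R := by
    rw [Metric.mem_eball, edist_zero_right] at hc ⊢
    exact (enorm_le_iff_norm_le.2 (c.norm_coe_le_norm t)).trans_lt hc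
  have hsum := (P.hasSum (Metric.eball_subset_eball (hp.r_le.trans hP) hc)).mapL (evalCLM 𝕜 t)
  have hsum_f := hp.hasSum hct
  rw [zero_add] at hsum_f
  exact (hsum.unique hsum_f).trans (hcf t).symm

theorem eventually_fderiv_superposition_apply {f : E → F} (hf : AnalyticAt 𝕜 f 0) :
    ∀ᶠ c : C(K, E) in 𝓝 0, ∀ w t, fderiv 𝕜 (superposition f) c w t = fderiv 𝕜 f (c t) (w t) := by
  filter_upwards [(analyticAt_superposition (K := K) hf).eventually_analyticAt,
    eventually_forall_apply hf.eventually_analyticAt, eventually_eventually_nhds.2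
      (eventually_superposition_apply (K := K) hf.eventually_continuousAt)]
    with c hc hct hcf w t
  have hleft := (evalCLM 𝕜 t : C(K, F) →L[𝕜] F).hasFDerivAt.comp c hc.differentiableAt.hasFDerivAt
  have hright := (hct t).differentiableAt.hasFDerivAt.comp c (evalCLM 𝕜 t).hasFDerivAt
  exact congr($((hleft.congr_of_eventuallyEq
    (hcf.mono fun c' hc' => (hc' t).symm)).unique hright) w)

theorem RelatedAt.superposition {h : E → F} {V : E → E} {W : F → F} (hVW : RelatedAt 𝕜 h V W 0)
    (hh : AnalyticAt 𝕜 h 0) (hh0 : h 0 = 0) (hV : ∀ᶠ x in 𝓝 0, ContinuousAt V x)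
    (hW : ∀ᶠ x in 𝓝 0, ContinuousAt W x) :
    RelatedAt 𝕜 (superposition h : C(K, E) → C(K, F)) (superposition V) (superposition W) 0 := by
  have hsup : Tendsto (_root_.superposition h : C(K, E) → C(K, F)) (𝓝 0) (𝓝 0) := by
    simpa only [ContinuousAt, superposition_zero hh0] using
      (analyticAt_superposition (K := K) hh).continuousAt
  filter_upwards [eventually_fderiv_superposition_apply hh, eventually_superposition_apply hV,
    hsup.eventually (eventually_superposition_apply hW),
    eventually_superposition_apply hh.eventually_continuousAt,
    eventually_forall_apply hVW] with c hd hcV hcW hch hc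
  ext1 t
  rw [hd, hcV, hcW, hch, hc]

end Superposition

section Curves

open unitInterval

variable {E F : Type*} [NormedAddCommGroup E] [NormedAddCommGroup F]

section Real

variable [NormedSpace ℝ E]

/-- The curve `c : [0, 1] → E` is differentiable with derivative `v`. -/
def HasVelocity (c v : C(I, E)) : Prop :=
  ∀ t : I, HasDerivWithinAt (Set.IccExtend zero_le_one c) (v t) I t

theorem HasVelocity.add {c₁ c₂ v₁ v₂ : C(I, E)} (h₁ : HasVelocity c₁ v₁) (h₂ : HasVelocity c₂ v₂) :
    HasVelocity (c₁ + c₂) (v₁ + v₂) :=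
  fun t => (h₁ t).add (h₂ t)

theorem HasVelocity.sub {c₁ c₂ v₁ v₂ : C(I, E)} (h₁ : HasVelocity c₁ v₁) (h₂ : HasVelocity c₂ v₂) :
    HasVelocity (c₁ - c₂) (v₁ - v₂) :=
  fun t => (h₁ t).sub (h₂ t)

theorem hasVelocity_const (x : E) : HasVelocity (ContinuousMap.const I x) 0 :=
  fun _ => hasDerivWithinAt_const _ _ x

theorem HasVelocity.eq_const {c : C(I, E)} (hc : HasVelocity c 0) :
    c = ContinuousMap.const I (c 0) := by
  ext1 t
  simpa [Set.IccExtend_of_mem] using constant_of_has_deriv_right_zero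
    (c.continuous.Icc_extend' (h := zero_le_one)).continuousOn
    (fun s hs => (hc ⟨s, Ico_subset_Icc_self hs⟩).mono_of_mem_nhdsWithin
      (mem_of_superset (Icc_mem_nhdsGE hs.2) (Icc_subset_Icc_left hs.1))) t t.2

theorem eqOn_Icc_of_locallyLipschitzOn {U : Set E} {W : E → E}
    (hW : LocallyLipschitzOn U W) {a b : ℝ} {c₁ c₂ : ℝ → E}
    (h₁ : ∀ t ∈ Icc a b, c₁ t ∈ U ∧ HasDerivWithinAt c₁ (W (c₁ t)) (Icc a b) t)
    (h₂ : ∀ t ∈ Icc a b, c₂ t ∈ U ∧ HasDerivWithinAt c₂ (W (c₂ t)) (Icc a b) t)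
    (ha : c₁ a = c₂ a) : EqOn c₁ c₂ (Icc a b) := by
  have hc₁ : ContinuousOn c₁ (Icc a b) := fun t ht => (h₁ t ht).2.continuousWithinAt
  have hc₂ : ContinuousOn c₂ (Icc a b) := fun t ht => (h₂ t ht).2.continuousWithinAt
  let S : Set E := c₁ '' Icc a b ∪ c₂ '' Icc a b
  have hS : IsCompact S := (isCompact_Icc.image_of_continuousOn hc₁).union
    (isCompact_Icc.image_of_continuousOn hc₂)
  have hSU : S ⊆ U :=
    union_subset (image_subset_iff.2 fun t ht => (h₁ t ht).1)
      (image_subset_iff.2 fun t ht => (h₂ t ht).1)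
  obtain ⟨C, hC⟩ := (hW.mono hSU).exists_lipschitzOnWith_of_compact hS
  have hright {t : ℝ} (ht : t ∈ Ico a b) : Icc a b ∈ 𝓝[≥] t :=
    mem_of_superset (Icc_mem_nhdsGE ht.2) (Icc_subset_Icc_left ht.1)
  exact ODE_solution_unique_of_mem_Icc_right (v := fun _ => W) (s := fun _ => S) (fun _ _ => hC)
    hc₁ (fun t ht => (h₁ t (Ico_subset_Icc_self ht)).2.mono_of_mem_nhdsWithin (hright ht))
    (fun t ht => .inl (mem_image_of_mem _ (Ico_subset_Icc_self ht)))
    hc₂ (fun t ht => (h₂ t (Ico_subset_Icc_self ht)).2.mono_of_mem_nhdsWithin (hright ht))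
    (fun t ht => .inr (mem_image_of_mem _ (Ico_subset_Icc_self ht))) ha

end Real

variable [NormedSpace ℂ E] [NormedSpace ℂ F]

theorem HasVelocity.compLeft {c v : C(I, E)} (h : HasVelocity c v) (B : E →L[ℂ] F) :
    HasVelocity (B.compLeftContinuous ℂ I c) (B.compLeftContinuous ℂ I v) :=
  fun t => (B.restrictScalars ℝ).hasFDerivAt.comp_hasDerivWithinAt (t : ℝ) (h t)

theorem eventually_hasVelocity_superposition [CompleteSpace F] {h : E → F}
    (hh : AnalyticAt ℂ h 0) : ∀ᶠ c : C(I, E) in 𝓝 0, ∀ v, HasVelocity c v →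
      HasVelocity (superposition h c) (fderiv ℂ (superposition h) c v) := by
  filter_upwards [eventually_fderiv_superposition_apply hh,
    eventually_forall_apply hh.eventually_analyticAt, eventually_superposition_apply
      hh.eventually_continuousAt] with c hd hct hcs v hv t
  have hfd : HasFDerivAt h ((fderiv ℂ h (c t)).restrictScalars ℝ)
      (Set.IccExtend zero_le_one c t) := by
    rw [Set.IccExtend_val]
    exact (hct t).differentiableAt.hasFDerivAt.restrictScalars ℝ
  rw [hd]
  refine (hfd.comp_hasDerivWithinAt (t : ℝ) (hv t)).congr_of_mem (fun s hs => ?_) t.2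
  rw [Function.comp_apply, Set.IccExtend_of_mem _ _ hs, Set.IccExtend_of_mem _ _ hs, hcs]

/-- Integration from the left endpoint. -/
noncomputable def primitiveCLM [CompleteSpace E] : C(I, E) →L[ℂ] C(I, E) :=
  have hintegrable (g : C(I, E)) (a b : ℝ) :
      IntervalIntegrable (Set.IccExtend zero_le_one g) MeasureTheory.volume a b :=
    (g.continuous.Icc_extend' (h := zero_le_one)).intervalIntegrable a b
  LinearMap.mkContinuous
    { toFun g := ⟨fun t => ∫ s in (0 : ℝ)..t, Set.IccExtend zero_le_one g s,
        (intervalIntegral.continuous_primitive (hintegrable g) 0).comp continuous_subtype_val⟩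
      map_add' f g := by
        ext1 t
        exact intervalIntegral.integral_add (hintegrable f _ _) (hintegrable g _ _)
      map_smul' a f := by
        ext1 t
        exact intervalIntegral.integral_smul a _ }
    1 fun g => (ContinuousMap.norm_le _ (by positivity)).2 fun t => by
      refine (intervalIntegral.norm_integral_le_of_norm_le_const
        fun s _ => g.norm_coe_le_norm _).trans ?_
      rw [sub_zero, abs_of_nonneg t.2.1, mul_comm]
      exact mul_le_mul_of_nonneg_right t.2.2 (norm_nonneg _)

variable [CompleteSpace E]

theorem primitiveCLM_apply_zero (g : C(I, E)) : primitiveCLM g 0 = 0 :=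
  intervalIntegral.integral_same

theorem hasVelocity_primitiveCLM (g : C(I, E)) : HasVelocity (primitiveCLM g) g := by
  intro t
  have hg : Continuous (Set.IccExtend zero_le_one g) := g.continuous.Icc_extend'
  have := (hg.integral_hasStrictDerivAt 0 (t : ℝ)).hasDerivAt.hasDerivWithinAt (s := I)
  rw [Set.IccExtend_val] at this
  exact this.congr_of_mem (fun s hs => Set.IccExtend_of_mem _ _ hs) t.2

theorem hasVelocity_iff_eq_const_add_primitiveCLM {c v : C(I, E)} :
    HasVelocity c v ↔ c = ContinuousMap.const I (c 0) + primitiveCLM v := by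
  refine ⟨fun h => ?_, fun h => ?_⟩
  · have hsub := h.sub (hasVelocity_primitiveCLM v)
    rw [sub_self] at hsub
    rw [← sub_eq_iff_eq_add, hsub.eq_const, ContinuousMap.sub_apply, primitiveCLM_apply_zero,
      sub_zero]
  · rw [h]
    simpa using (hasVelocity_const (c 0)).add (hasVelocity_primitiveCLM v)

end Curves

section LinearEquation

open unitInterval

variable {K E F : Type*} [TopologicalSpace K] [NormedAddCommGroup E] [NormedSpace ℂ E]
  [NormedAddCommGroup F] [NormedSpace ℂ F]

/-- The pointwise action of a continuous family of operators on continuous maps. -/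
noncomputable def pointwiseCLM [CompactSpace K] (L : C(K, E →L[ℂ] F)) : C(K, E) →L[ℂ] C(K, F) :=
  LinearMap.mkContinuous
    { toFun c := ⟨fun t => L t (c t), by fun_prop⟩
      map_add' c d := ContinuousMap.ext fun t => map_add (L t) (c t) (d t)
      map_smul' a c := ContinuousMap.ext fun t => map_smul (L t) a (c t) }
    ‖L‖ fun c => (ContinuousMap.norm_le _ (by positivity)).2 fun t =>
      (L t).le_of_opNorm_le_of_le (L.norm_coe_le_norm t) (c.norm_coe_le_norm t)

theorem pointwiseCLM_apply [CompactSpace K] (L : C(K, E →L[ℂ] F)) (c : C(K, E)) (t : K) :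
    pointwiseCLM L c t = L t (c t) :=
  rfl

variable [CompleteSpace E]

theorem hasDerivAt_exp_ofReal_smul (A : E →L[ℂ] E) (t : ℝ) :
    HasDerivAt (fun s : ℝ => NormedSpace.exp ((s : ℂ) • A))
      (A ∘L NormedSpace.exp ((t : ℂ) • A)) t :=
  ((hasDerivAt_exp_smul_const' A (t : ℂ)).scomp t
    Complex.ofRealCLM.hasDerivAt).congr_deriv (one_smul ℂ _)

/-- The curve `t ↦ exp (t A)` of operators. -/
noncomputable def expCurve (A : E →L[ℂ] E) : C(I, E →L[ℂ] E) where
  toFun t := NormedSpace.exp (((t : ℝ) : ℂ) • A)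
  continuous_toFun := (continuous_iff_continuousAt.2 fun t =>
    (hasDerivAt_exp_ofReal_smul A t).continuousAt).comp continuous_subtype_val

theorem expCurve_apply (A : E →L[ℂ] E) (t : I) :
    expCurve A t = NormedSpace.exp (((t : ℝ) : ℂ) • A) :=
  rfl

theorem expCurve_neg_mul_expCurve (A : E →L[ℂ] E) (t : I) :
    expCurve (-A) t * expCurve A t = 1 := by
  let _ : NormedAlgebra ℚ (E →L[ℂ] E) := .restrictScalars ℚ ℂ _
  have hcomm : Commute ((t : ℂ) • -A) ((t : ℂ) • A) := by
    rw [smul_neg]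
    exact (Commute.refl _).neg_left
  rw [expCurve_apply, expCurve_apply, ← NormedSpace.exp_add_of_commute hcomm, smul_neg,
    neg_add_cancel, NormedSpace.exp_zero]

theorem pointwiseCLM_expCurve_neg_expCurve (A : E →L[ℂ] E) (u : C(I, E)) :
    pointwiseCLM (expCurve (-A)) (pointwiseCLM (expCurve A) u) = u :=
  ContinuousMap.ext fun t => congr($(expCurve_neg_mul_expCurve A t) (u t))

theorem commute_expCurve {A B : E →L[ℂ] E} (h : Commute B A) (t : I) : Commute B (expCurve A t) :=
  (h.smul_right _).exp_right

theorem pointwiseCLM_expCurve_compLeftContinuous {A B : E →L[ℂ] E} (h : Commute B A)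
    (u : C(I, E)) : pointwiseCLM (expCurve A) (B.compLeftContinuous ℂ I u) =
      B.compLeftContinuous ℂ I (pointwiseCLM (expCurve A) u) :=
  ContinuousMap.ext fun t => congr($((commute_expCurve h t).eq) (u t)).symm

theorem HasVelocity.pointwiseCLM_expCurve {u v : C(I, E)} (h : HasVelocity u v) (A : E →L[ℂ] E) :
    HasVelocity (pointwiseCLM (expCurve A) u)
      (A.compLeftContinuous ℂ I (pointwiseCLM (expCurve A) u) + pointwiseCLM (expCurve A) v) := by
  intro t
  have happly := (isBoundedBilinearMap_apply (𝕜 := ℂ) (E := E) (F := E)).hasFDerivAt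
    (expCurve A t, u t) |>.restrictScalars ℝ
  have hcurve := (hasDerivAt_exp_ofReal_smul A t).hasDerivWithinAt.prodMk (h t)
  rw [← Set.IccExtend_val zero_le_one u t] at happly
  refine ((happly.comp_hasDerivWithinAt (t : ℝ) hcurve).congr_of_mem (fun s hs => ?_)
    t.2).congr_deriv ?_
  · simp only [Function.comp_apply, Set.IccExtend_of_mem _ _ hs]
    rfl
  · simp only [IccExtend_val, Complex.coe_smul, ContinuousLinearMap.coe_restrictScalars',
      IsBoundedBilinearMap.deriv_apply, ContinuousLinearMap.comp_apply, add_comm,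
      ContinuousLinearMap.compLeftContinuous_apply, ZeroHom.toFun_eq_coe,
      AddMonoidHom.toZeroHom_coe, ContinuousMap.add_apply]
    rfl

end LinearEquation

section LinearFlow

open unitInterval

variable {E : Type*} [NormedAddCommGroup E] [NormedSpace ℂ E] [CompleteSpace E]
  {A B : E →L[ℂ] E}

/-- The solution of `u' = A u` on `[0, 1]` as a function of its initial value. -/
noncomputable def linearFlowCLM (A : E →L[ℂ] E) : E →L[ℂ] C(I, E) :=
  pointwiseCLM (expCurve A) ∘L ContinuousLinearMap.const ℂ I

/-- The solution of `u' = A u + g` on `[0, 1]` with `u 0 = 0`, as a function of `g`. -/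
noncomputable def duhamelCLM (A : E →L[ℂ] E) : C(I, E) →L[ℂ] C(I, E) :=
  pointwiseCLM (expCurve A) ∘L primitiveCLM ∘L pointwiseCLM (expCurve (-A))

theorem pointwiseCLM_expCurve_expCurve_neg (A : E →L[ℂ] E) (u : C(I, E)) :
    pointwiseCLM (expCurve A) (pointwiseCLM (expCurve (-A)) u) = u := by
  simpa only [neg_neg] using pointwiseCLM_expCurve_neg_expCurve (-A) u

theorem linearFlowCLM_apply_zero (A : E →L[ℂ] E) (x : E) : linearFlowCLM A x 0 = x := by
  simp [linearFlowCLM, pointwiseCLM_apply, expCurve_apply]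

theorem duhamelCLM_apply_zero (A : E →L[ℂ] E) (g : C(I, E)) : duhamelCLM A g 0 = 0 := by
  simp [duhamelCLM, pointwiseCLM_apply, primitiveCLM_apply_zero]

theorem HasVelocity.eq_linearFlowCLM_add_duhamelCLM {u g : C(I, E)}
    (h : HasVelocity u (A.compLeftContinuous ℂ I u + g)) :
    u = linearFlowCLM A (u 0) + duhamelCLM A g := by
  set p := pointwiseCLM (expCurve (-A)) u with hp
  have hpu : pointwiseCLM (expCurve A) p = u :=
    pointwiseCLM_expCurve_expCurve_neg A u
  have hp0 : p 0 = u 0 := by simp [hp, pointwiseCLM_apply, expCurve_apply]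
  have hneg : (-A).compLeftContinuous ℂ I p = -A.compLeftContinuous ℂ I p := rfl
  have hpd := h.pointwiseCLM_expCurve (-A)
  rw [map_add, pointwiseCLM_expCurve_compLeftContinuous (Commute.refl A).neg_right, hneg,
    neg_add_cancel_left, hasVelocity_iff_eq_const_add_primitiveCLM, ← hp, hp0] at hpd
  conv_lhs => rw [← hpu, hpd, map_add]
  rfl

theorem hasVelocity_of_eq_linearFlowCLM_add_duhamelCLM {u g : C(I, E)} {x : E}
    (h : u = linearFlowCLM A x + duhamelCLM A g) :
    HasVelocity u (A.compLeftContinuous ℂ I u + g) := by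
  have hsum : u = pointwiseCLM (expCurve A)
      (ContinuousMap.const I x + primitiveCLM (pointwiseCLM (expCurve (-A)) g)) := by
    rw [h, map_add]
    rfl
  have hud := ((hasVelocity_const x).add (hasVelocity_primitiveCLM
    (pointwiseCLM (expCurve (-A)) g))).pointwiseCLM_expCurve A
  rwa [zero_add, ← hsum, pointwiseCLM_expCurve_expCurve_neg] at hud

/-- The average of `exp ((1 - s) A) (g s)` over `s ∈ [0, 1]`. When `exp A = 1` this is the mean of
`g` for the circle action generated by `A`. -/
noncomputable def twistedMeanCLM (A : E →L[ℂ] E) : C(I, E) →L[ℂ] E :=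
  ContinuousMap.evalCLM ℂ 1 ∘L duhamelCLM A

theorem HasVelocity.apply_one_eq {u g : C(I, E)}
    (h : HasVelocity u (A.compLeftContinuous ℂ I u + g)) :
    u 1 = NormedSpace.exp A (u 0) + twistedMeanCLM A g := by
  conv_lhs => rw [h.eq_linearFlowCLM_add_duhamelCLM]
  simp [linearFlowCLM, pointwiseCLM_apply, expCurve_apply, twistedMeanCLM]

theorem twistedMeanCLM_linearFlowCLM (A : E →L[ℂ] E) (v : E) :
    twistedMeanCLM A (linearFlowCLM A v) = NormedSpace.exp A v := by
  have hprim : primitiveCLM (ContinuousLinearMap.const ℂ I v) 1 = v := by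
    simp [primitiveCLM, Set.IccExtend]
  simp [twistedMeanCLM, duhamelCLM, linearFlowCLM, pointwiseCLM_expCurve_neg_expCurve,
    pointwiseCLM_apply, hprim, expCurve_apply]

theorem twistedMeanCLM_compLeftContinuous (hAB : Commute B A) (g : C(I, E)) :
    twistedMeanCLM A (B.compLeftContinuous ℂ I g) = B (twistedMeanCLM A g) := by
  have hprim (f : C(I, E)) : primitiveCLM (B.compLeftContinuous ℂ I f) =
      B.compLeftContinuous ℂ I (primitiveCLM f) := by
    have := hasVelocity_iff_eq_const_add_primitiveCLM.1
      ((hasVelocity_primitiveCLM f).compLeft B)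
    have h0 : B.compLeftContinuous ℂ I (primitiveCLM f) 0 = 0 :=
      (congrArg B (primitiveCLM_apply_zero f)).trans (map_zero B)
    rw [this, h0]
    exact (zero_add _).symm
  simp only [twistedMeanCLM, duhamelCLM, ContinuousLinearMap.comp_apply,
    pointwiseCLM_expCurve_compLeftContinuous hAB,
    pointwiseCLM_expCurve_compLeftContinuous hAB.neg_right, hprim]
  rfl

end LinearFlow

section LocalFlow

open unitInterval

variable {E : Type*} [NormedAddCommGroup E] [NormedSpace ℂ E]
  {W Z : E → E} {Φ : E → C(I, E)}

/-- `Φ` sends each point near `0` to the integral curve of `W` on `[0, 1]` that starts there. -/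
structure IsLocalFlow (Φ : E → C(I, E)) (W : E → E) : Prop where
  analyticAt : AnalyticAt ℂ Φ 0
  map_zero : Φ 0 = 0
  eventually_apply_zero : ∀ᶠ x in 𝓝 0, Φ x 0 = x
  eventually_hasVelocity : ∀ᶠ x in 𝓝 0, HasVelocity (Φ x) (superposition W (Φ x))

theorem IsLocalFlow.tendsto_zero (hΦ : IsLocalFlow Φ W) : Tendsto Φ (𝓝 0) (𝓝 0) := by
  simpa only [ContinuousAt, hΦ.map_zero] using hΦ.analyticAt.continuousAt

/-- The part of order at least two of the vector field `W` at its zero `0`. -/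
noncomputable def nonlinearPart (W : E → E) (x : E) : E :=
  W x - fderiv ℂ W 0 x

theorem analyticAt_nonlinearPart (hW : AnalyticAt ℂ W 0) : AnalyticAt ℂ (nonlinearPart W) 0 :=
  hW.sub ((fderiv ℂ W 0).analyticAt 0)

theorem eventually_superposition_eq_add_nonlinearPart (hW : AnalyticAt ℂ W 0) :
    ∀ᶠ c : C(I, E) in 𝓝 0, superposition W c =
      (fderiv ℂ W 0).compLeftContinuous ℂ I c + superposition (nonlinearPart W) c := by
  filter_upwards [eventually_superposition_apply hW.eventually_continuousAt,
    eventually_superposition_apply (analyticAt_nonlinearPart hW).eventually_continuousAt]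
    with c hcW hcN
  ext t
  rw [hcW, ContinuousMap.add_apply, hcN]
  exact (add_sub_cancel _ _).symm

variable [CompleteSpace E]

theorem eventually_fderiv_superposition_eq_add_nonlinearPart (hW : AnalyticAt ℂ W 0) :
    ∀ᶠ c : C(I, E) in 𝓝 0, ∀ z, fderiv ℂ (superposition W) c z =
      (fderiv ℂ W 0).compLeftContinuous ℂ I z + fderiv ℂ (superposition (nonlinearPart W)) c z := by
  filter_upwards [(eventually_superposition_eq_add_nonlinearPart hW).eventually_nhds,
    (analyticAt_superposition (K := I) (analyticAt_nonlinearPart hW)).eventually_analyticAt]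
    with c hc hcN z
  have hsum := (((fderiv ℂ W 0).compLeftContinuous ℂ I).hasFDerivAt (x := c)).add
    hcN.differentiableAt.hasFDerivAt
  exact congr($((hsum.congr_of_eventuallyEq hc).fderiv) z)

/-- The defect of the curve `c` in the integral equation for the integral curves of `W`. -/
noncomputable def duhamelResidual (W : E → E) (c : C(I, E)) : C(I, E) :=
  c - duhamelCLM (fderiv ℂ W 0) (superposition (nonlinearPart W) c)

theorem fderiv_duhamelResidual_apply {c : C(I, E)}
    (hc : AnalyticAt ℂ (superposition (nonlinearPart W) : C(I, E) → C(I, E)) c) (z : C(I, E)) :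
    fderiv ℂ (duhamelResidual W) c z =
      z - duhamelCLM (fderiv ℂ W 0) (fderiv ℂ (superposition (nonlinearPart W)) c z) :=
  congr($(((hasFDerivAt_id c).sub ((duhamelCLM (fderiv ℂ W 0)).hasFDerivAt.comp c
    hc.differentiableAt.hasFDerivAt)).fderiv) z)

theorem tangentToId_duhamelResidual (hW : AnalyticAt ℂ W 0) (hW0 : W 0 = 0) :
    TangentToId ℂ (duhamelResidual W) where
  analyticAt := analyticAt_id.sub (((duhamelCLM (fderiv ℂ W 0)).analyticAt _).comp
    (analyticAt_superposition (analyticAt_nonlinearPart hW)))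
  map_zero := by
    have hN0 : nonlinearPart W 0 = 0 := by simp [nonlinearPart, hW0]
    simp [duhamelResidual, superposition_zero hN0]
  fderiv_zero := by
    ext1 z
    have hd : fderiv ℂ (superposition (nonlinearPart W)) (0 : C(I, E)) z = 0 := by
      ext t
      have h0 := (eventually_fderiv_superposition_apply hW (K := I)).self_of_nhds z t
      have hsum := (eventually_fderiv_superposition_eq_add_nonlinearPart hW).self_of_nhds z
      exact left_eq_add.1 (h0.symm.trans congr($hsum t))
    rw [fderiv_duhamelResidual_apply (analyticAt_superposition (analyticAt_nonlinearPart hW)), hd,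
      map_zero, sub_zero, ContinuousLinearMap.id_apply]

theorem IsLocalFlow.eventually_duhamelResidual_eq (hΦ : IsLocalFlow Φ W)
    (hW : AnalyticAt ℂ W 0) :
    ∀ᶠ x in 𝓝 0, duhamelResidual W (Φ x) = linearFlowCLM (fderiv ℂ W 0) x := by
  filter_upwards [hΦ.eventually_apply_zero, hΦ.eventually_hasVelocity,
    hΦ.tendsto_zero.eventually (eventually_superposition_eq_add_nonlinearPart hW)]
    with x hx0 hxd hxW
  rw [hxW] at hxd
  rw [duhamelResidual, sub_eq_iff_eq_add]
  simpa only [hx0] using hxd.eq_linearFlowCLM_add_duhamelCLM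

theorem IsLocalFlow.eventually_fderiv_duhamelResidual_apply (hΦ : IsLocalFlow Φ W)
    (hW : AnalyticAt ℂ W 0) (hW0 : W 0 = 0) :
    ∀ᶠ x in 𝓝 0, ∀ v, fderiv ℂ (duhamelResidual W) (Φ x) (fderiv ℂ Φ x v) =
      linearFlowCLM (fderiv ℂ W 0) v := by
  filter_upwards [(hΦ.eventually_duhamelResidual_eq hW).eventually_nhds,
    hΦ.analyticAt.eventually_analyticAt, hΦ.tendsto_zero.eventually
      (tangentToId_duhamelResidual hW hW0).analyticAt.eventually_analyticAt] with x hx hΦx hG v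
  have hcomp := hG.differentiableAt.hasFDerivAt.comp x hΦx.differentiableAt.hasFDerivAt
  exact congr($(hcomp.unique
    ((linearFlowCLM (fderiv ℂ W 0)).hasFDerivAt.congr_of_eventuallyEq hx)) v)

theorem IsLocalFlow.fderiv_zero (hΦ : IsLocalFlow Φ W) (hW : AnalyticAt ℂ W 0) (hW0 : W 0 = 0) :
    fderiv ℂ Φ 0 = linearFlowCLM (fderiv ℂ W 0) := by
  ext1 v
  simpa [hΦ.map_zero, (tangentToId_duhamelResidual hW hW0).fderiv_zero] using
    (hΦ.eventually_fderiv_duhamelResidual_apply hW hW0).self_of_nhds v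

theorem exists_isLocalFlow (hW : AnalyticAt ℂ W 0) (hW0 : W 0 = 0) : ∃ Φ, IsLocalFlow Φ W := by
  have hG := tangentToId_duhamelResidual hW hW0
  obtain ⟨e, he, h0e, -, hbi⟩ := hG.exists_isBianalytic univ_mem
  have he0 : e 0 = 0 := by rw [he, hG.map_zero]
  have h0t : (0 : C(I, E)) ∈ e.target := he0 ▸ e.map_source h0e
  have hsymm0 : e.symm 0 = 0 := by rw [← he0, e.left_inv h0e, he0]
  set L := linearFlowCLM (fderiv ℂ W 0)
  have hLt : Tendsto L (𝓝 0) (𝓝 0) := by simpa using L.continuous.tendsto 0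
  have hΦ : AnalyticAt ℂ (fun x => e.symm (L x)) 0 :=
    (hbi.analyticOnNhd_symm 0 h0t).comp_of_eq (L.analyticAt 0) (map_zero L)
  have hΦ0 : e.symm (L 0) = 0 := by rw [map_zero, hsymm0]
  have hΦt : Tendsto (fun x => e.symm (L x)) (𝓝 0) (𝓝 0) := by
    simpa only [ContinuousAt, hΦ0] using hΦ.continuousAt
  have hsol : ∀ᶠ x in 𝓝 0, e.symm (L x) = L x + duhamelCLM (fderiv ℂ W 0)
      (superposition (nonlinearPart W) (e.symm (L x))) := by
    filter_upwards [hLt.eventually (e.open_target.mem_nhds h0t)] with x hx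
    have hres := e.right_inv hx
    rwa [he, duhamelResidual, sub_eq_iff_eq_add] at hres
  refine ⟨fun x => e.symm (L x), hΦ, hΦ0, ?_, ?_⟩
  · filter_upwards [hsol] with x hx
    rw [hx, ContinuousMap.add_apply, linearFlowCLM_apply_zero, duhamelCLM_apply_zero, add_zero]
  · filter_upwards [hsol, hΦt.eventually (eventually_superposition_eq_add_nonlinearPart hW)]
      with x hx hxW
    rw [hxW]
    exact hasVelocity_of_eq_linearFlowCLM_add_duhamelCLM hx

theorem eventually_fderiv_superposition_comm (hW : AnalyticAt ℂ W 0) (hZ : AnalyticAt ℂ Z 0)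
    (hWZ : VectorField.lieBracket ℂ W Z =ᶠ[𝓝 0] 0) :
    ∀ᶠ c : C(I, E) in 𝓝 0, fderiv ℂ (superposition Z) c (superposition W c) =
      fderiv ℂ (superposition W) c (superposition Z c) := by
  filter_upwards [eventually_fderiv_superposition_apply hW,
    eventually_fderiv_superposition_apply hZ,
    eventually_superposition_apply hW.eventually_continuousAt,
    eventually_superposition_apply hZ.eventually_continuousAt,
    eventually_forall_apply hWZ] with c hWd hZd hWc hZc hc
  ext t
  rw [hWd, hZd, hWc, hZc]
  exact sub_eq_zero.1 (hc t)

/-- If `[W, Z] = 0`, then `Z` along an integral curve of `W` solves the variational equation, whose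
only solution starting at `Z x` is `DΦ(x) (Z x)`. -/
theorem IsLocalFlow.relatedAt_superposition (hΦ : IsLocalFlow Φ W) (hW : AnalyticAt ℂ W 0)
    (hW0 : W 0 = 0) (hZ : AnalyticAt ℂ Z 0) (hWZ : VectorField.lieBracket ℂ W Z =ᶠ[𝓝 0] 0) :
    RelatedAt ℂ Φ Z (superposition Z) 0 := by
  have hΦt := hΦ.tendsto_zero
  obtain ⟨e, he, h0e, -, hbi⟩ :=
    (tangentToId_duhamelResidual hW hW0).exists_isBianalytic univ_mem
  filter_upwards [hΦ.eventually_fderiv_duhamelResidual_apply hW hW0,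
    hΦ.eventually_apply_zero, hΦ.eventually_hasVelocity,
    hΦt.eventually (eventually_fderiv_superposition_comm hW hZ hWZ),
    hΦt.eventually (eventually_fderiv_superposition_eq_add_nonlinearPart hW),
    hΦt.eventually (eventually_hasVelocity_superposition hZ),
    hΦt.eventually (eventually_superposition_apply hZ.eventually_continuousAt),
    hΦt.eventually (analyticAt_superposition (K := I)
      (analyticAt_nonlinearPart hW)).eventually_analyticAt,
    hΦt.eventually (e.open_source.mem_nhds h0e)] with x hGΦ hx0 hxd hcomm hsum hvel hxZ hN hxe
  set z := superposition Z (Φ x) with hz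
  have hz0 : z 0 = Z x := by rw [hz, hxZ, hx0]
  have hzd := hvel _ hxd
  rw [hcomm, hsum] at hzd
  have hGz : fderiv ℂ (duhamelResidual W) (Φ x) z = linearFlowCLM (fderiv ℂ W 0) (Z x) := by
    rw [fderiv_duhamelResidual_apply hN, sub_eq_iff_eq_add, ← hz0]
    exact hzd.eq_linearFlowCLM_add_duhamelCLM
  rw [← hbi.fderiv_symm_apply_fderiv hxe (fderiv ℂ Φ x (Z x)), he, hGΦ, ← hGz, ← he,
    hbi.fderiv_symm_apply_fderiv hxe]

end LocalFlow

section Averaging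

open unitInterval

variable {E : Type*} [NormedAddCommGroup E] [NormedSpace ℂ E]

theorem hasDerivAt_comp_mul_two_pi {c : ℝ → E} {v : E} {t : ℝ}
    (hc : HasDerivAt c (Complex.I • v) (t * (2 * Real.pi))) :
    HasDerivAt (fun s => c (s * (2 * Real.pi))) ((2 * Real.pi * Complex.I : ℂ) • v) t := by
  refine (hc.scomp t ((hasDerivAt_id t).mul_const (2 * Real.pi))).congr_deriv ?_
  rw [one_mul, ← Complex.coe_smul, smul_smul]
  push_cast
  rfl

variable [CompleteSpace E] {V W Z h : E → E} {Φ : E → C(I, E)}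

theorem locallyLipschitzOn_of_analyticOnNhd {U : Set E} (hW : AnalyticOnNhd ℂ W U) :
    LocallyLipschitzOn U W := fun x hx => by
  obtain ⟨K, t, ht, hK⟩ :=
    ((hW x hx).contDiffAt.restrict_scalars ℝ (n := 1)).exists_lipschitzOnWith
  exact ⟨K, t, mem_nhdsWithin_of_mem_nhds ht, hK⟩

theorem HasPeriodicFlow.eventually_apply_one_eq {U : Set E} (hper : HasPeriodicFlow V U)
    (hU : U ∈ 𝓝 0) (hV : AnalyticOnNhd ℂ V U)
    (hΦ : IsLocalFlow Φ fun x => (2 * Real.pi * Complex.I : ℂ) • V x) :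
    ∀ᶠ x in 𝓝 0, Φ x 1 = x := by
  have hW : AnalyticOnNhd ℂ (fun x => (2 * Real.pi * Complex.I : ℂ) • V x) U :=
    fun x hx => (hV x hx).const_smul (c := (2 * Real.pi * Complex.I : ℂ))
  filter_upwards [hU, hΦ.eventually_apply_zero, hΦ.eventually_hasVelocity,
    hΦ.tendsto_zero.eventually (eventually_forall_apply hU),
    hΦ.tendsto_zero.eventually (eventually_superposition_apply
      (hW 0 (mem_of_mem_nhds hU)).eventually_continuousAt)] with x hxU hx0 hxd hΦU hxW
  obtain ⟨c, hcU, hc0, hcd, hcper⟩ := hper x hxU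
  have hcurves := eqOn_Icc_of_locallyLipschitzOn (locallyLipschitzOn_of_analyticOnNhd hW)
    (c₁ := Set.IccExtend zero_le_one (Φ x)) (c₂ := fun s => c (s * (2 * Real.pi)))
    (a := 0) (b := 1)
    (fun t ht => by
      have hval : Set.IccExtend zero_le_one (Φ x) t = Φ x ⟨t, ht⟩ := Set.IccExtend_of_mem _ _ ht
      rw [hval, ← hxW ⟨t, ht⟩]
      exact ⟨hΦU _, hxd ⟨t, ht⟩⟩)
    (fun t _ => ⟨hcU _, (hasDerivAt_comp_mul_two_pi (hcd _)).hasDerivWithinAt⟩)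
    (by simp [hx0, hc0])
  have hend := hcurves (right_mem_Icc.2 zero_le_one)
  rw [Set.IccExtend_right] at hend
  calc Φ x 1 = c (1 * (2 * Real.pi)) := hend
    _ = c (0 + 2 * Real.pi) := by rw [one_mul, zero_add]
    _ = x := by rw [hcper, hc0]

theorem IsLocalFlow.exp_fderiv_eq_one (hΦ : IsLocalFlow Φ W) (hW : AnalyticAt ℂ W 0)
    (hW0 : W 0 = 0) (hclosed : ∀ᶠ x in 𝓝 0, Φ x 1 = x) :
    NormedSpace.exp (fderiv ℂ W 0) = 1 := by
  ext1 v
  have hend := (ContinuousMap.evalCLM ℂ (1 : I)).hasFDerivAt.comp (0 : E)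
    hΦ.analyticAt.differentiableAt.hasFDerivAt
  have := congr($(hend.unique ((hasFDerivAt_id (0 : E)).congr_of_eventuallyEq hclosed)) v)
  simpa [hΦ.fderiv_zero hW hW0, linearFlowCLM, pointwiseCLM_apply, expCurve_apply] using this

theorem HasVelocity.twistedMeanCLM_eq {u v : C(I, E)} {A : E →L[ℂ] E} (h : HasVelocity u v)
    (hA : NormedSpace.exp A = 1) (hu : u 1 = u 0) :
    twistedMeanCLM A v = A (twistedMeanCLM A u) := by
  rw [← sub_add_cancel v (A.compLeftContinuous ℂ I u), add_comm] at h
  have hend := h.apply_one_eq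
  rw [hA, hu, one_apply_eq_self, left_eq_add, map_sub, sub_eq_zero] at hend
  rw [hend, twistedMeanCLM_compLeftContinuous (Commute.refl A)]

/-- The average of the coordinate change `h` over the flow `Φ` of `W`, twisted by the flow of the
linear part of `W`. -/
noncomputable def flowAverage (W : E → E) (Φ : E → C(I, E)) (h : E → E) (x : E) : E :=
  twistedMeanCLM (fderiv ℂ W 0) (superposition h (Φ x))

theorem IsLocalFlow.analyticAt_superposition_comp (hΦ : IsLocalFlow Φ W) (hh : AnalyticAt ℂ h 0) :
    AnalyticAt ℂ (superposition h ∘ Φ) 0 :=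
  (analyticAt_superposition hh).comp_of_eq hΦ.analyticAt hΦ.map_zero

theorem IsLocalFlow.tangentToId_flowAverage (hΦ : IsLocalFlow Φ W) (hW : AnalyticAt ℂ W 0)
    (hW0 : W 0 = 0) (hA : NormedSpace.exp (fderiv ℂ W 0) = 1) (hh : TangentToId ℂ h) :
    TangentToId ℂ (flowAverage W Φ h) where
  analyticAt := ((twistedMeanCLM (fderiv ℂ W 0)).analyticAt _).comp
    (hΦ.analyticAt_superposition_comp hh.analyticAt)
  map_zero := by
    rw [flowAverage, hΦ.map_zero, superposition_zero hh.map_zero, _root_.map_zero]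
  fderiv_zero := by
    ext1 v
    have hsup : DifferentiableAt ℂ (superposition h) (Φ 0) := by
      rw [hΦ.map_zero]
      exact (analyticAt_superposition hh.analyticAt).differentiableAt
    have hcomp := (twistedMeanCLM (fderiv ℂ W 0)).hasFDerivAt.comp (0 : E)
      (hsup.hasFDerivAt.comp (0 : E) hΦ.analyticAt.differentiableAt.hasFDerivAt)
    have hid : fderiv ℂ (superposition h) (0 : C(I, E)) (linearFlowCLM (fderiv ℂ W 0) v) =
        linearFlowCLM (fderiv ℂ W 0) v := by
      ext t
      simp [(eventually_fderiv_superposition_apply hh.analyticAt).self_of_nhds, hh.fderiv_zero]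
    have hd : fderiv ℂ (flowAverage W Φ h) 0 v = _ := congr($(hcomp.fderiv) v)
    simpa [hΦ.map_zero, hΦ.fderiv_zero hW hW0, hid, twistedMeanCLM_linearFlowCLM, hA] using hd

theorem IsLocalFlow.relatedAt_flowAverage (hΦ : IsLocalFlow Φ W) (hW : AnalyticAt ℂ W 0)
    (hW0 : W 0 = 0) (hclosed : ∀ᶠ x in 𝓝 0, Φ x 1 = x) (hh : AnalyticAt ℂ h 0) :
    RelatedAt ℂ (flowAverage W Φ h) W (fderiv ℂ W 0) 0 := by
  have hself : RelatedAt ℂ Φ W (superposition W) 0 :=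
    hΦ.relatedAt_superposition hW hW0 hW (.of_eq VectorField.lieBracket_self)
  filter_upwards [hself, hclosed, hΦ.eventually_apply_zero, hΦ.eventually_hasVelocity,
    hΦ.analyticAt.eventually_analyticAt,
    hΦ.tendsto_zero.eventually (analyticAt_superposition (K := I) hh).eventually_analyticAt,
    hΦ.tendsto_zero.eventually (eventually_superposition_apply hh.eventually_continuousAt),
    hΦ.tendsto_zero.eventually (eventually_hasVelocity_superposition hh)]
    with x hx hx1 hx0 hxd hΦx hhx happly hvel
  have hcomp := (twistedMeanCLM (fderiv ℂ W 0)).hasFDerivAt.comp x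
    (hhx.differentiableAt.hasFDerivAt.comp x hΦx.differentiableAt.hasFDerivAt)
  calc fderiv ℂ (flowAverage W Φ h) x (W x)
      = twistedMeanCLM (fderiv ℂ W 0)
          (fderiv ℂ (superposition h) (Φ x) (fderiv ℂ Φ x (W x))) := congr($(hcomp.fderiv) (W x))
    _ = twistedMeanCLM (fderiv ℂ W 0)
          (fderiv ℂ (superposition h) (Φ x) (superposition W (Φ x))) := by rw [hx]
    _ = fderiv ℂ W 0 (flowAverage W Φ h x) := (hvel _ hxd).twistedMeanCLM_eq
          (hΦ.exp_fderiv_eq_one hW hW0 hclosed) (by rw [happly, happly, hx0, hx1])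

theorem commute_fderiv_of_lieBracket_eventuallyEq_zero (hW : AnalyticAt ℂ W 0) (hW0 : W 0 = 0)
    (hZ : AnalyticAt ℂ Z 0) (hZ0 : Z 0 = 0) (hWZ : VectorField.lieBracket ℂ W Z =ᶠ[𝓝 0] 0) :
    Commute (fderiv ℂ Z 0) (fderiv ℂ W 0) := by
  ext1 v
  have hbr := (hZ.fderiv.differentiableAt.hasFDerivAt.clm_apply
    hW.differentiableAt.hasFDerivAt).sub
      (hW.fderiv.differentiableAt.hasFDerivAt.clm_apply hZ.differentiableAt.hasFDerivAt)
  have hzero := (hasFDerivAt_const (𝕜 := ℂ) (0 : E) (0 : E)).congr_of_eventuallyEq hWZ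
  simpa [hW0, hZ0, sub_eq_zero] using congr($(hbr.unique hzero) v)

theorem IsLocalFlow.relatedAt_flowAverage_of_lieBracket_eventuallyEq_zero (hΦ : IsLocalFlow Φ W)
    (hW : AnalyticAt ℂ W 0) (hW0 : W 0 = 0) (hh : AnalyticAt ℂ h 0) (hh0 : h 0 = 0)
    (hZ : AnalyticAt ℂ Z 0) (hZ0 : Z 0 = 0) (hWZ : VectorField.lieBracket ℂ W Z =ᶠ[𝓝 0] 0)
    (hhZ : RelatedAt ℂ h Z (fderiv ℂ Z 0) 0) :
    RelatedAt ℂ (flowAverage W Φ h) Z (fderiv ℂ Z 0) 0 := by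
  have hsup : RelatedAt ℂ (superposition h) (superposition Z) (superposition (fderiv ℂ Z 0))
      (Φ 0) := hΦ.map_zero.symm ▸ hhZ.superposition hh hh0 hZ.eventually_continuousAt
        (.of_forall fun x => (fderiv ℂ Z 0).continuous.continuousAt)
  have hcomp := hsup.comp (hΦ.relatedAt_superposition hW hW0 hZ hWZ)
    (hΦ.map_zero.symm ▸ (analyticAt_superposition hh).eventually_analyticAt.mono
      fun _ hc => hc.differentiableAt)
    (hΦ.analyticAt.eventually_analyticAt.mono fun _ hx => hx.differentiableAt)
  have hmean : RelatedAt ℂ (twistedMeanCLM (fderiv ℂ W 0)) (superposition (fderiv ℂ Z 0))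
      (fderiv ℂ Z 0) ((superposition h ∘ Φ) 0) := .of_forall fun c => by
    have hc : superposition (fderiv ℂ Z 0) c = (fderiv ℂ Z 0).compLeftContinuous ℂ I c :=
      ContinuousMap.ext (superposition_apply ((fderiv ℂ Z 0).continuous.comp c.continuous))
    rw [ContinuousLinearMap.fderiv, hc, twistedMeanCLM_compLeftContinuous
      (commute_fderiv_of_lieBracket_eventuallyEq_zero hW hW0 hZ hZ0 hWZ)]
  exact hmean.comp hcomp (.of_forall fun _ => ContinuousLinearMap.differentiableAt _)
    ((hΦ.analyticAt_superposition_comp hh).eventually_analyticAt.mono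
      fun _ hx => hx.differentiableAt)

end Averaging

section Normalization

theorem HasPeriodicFlow.exists_tangentToId_relatedAt {E : Type*} [NormedAddCommGroup E]
    [NormedSpace ℂ E] [CompleteSpace E] {V : E → E} {U : Set E} (hper : HasPeriodicFlow V U)
    (hU : U ∈ 𝓝 0) (hV : AnalyticOnNhd ℂ V U) (hV0 : V 0 = 0) {h : E → E}
    (hh : TangentToId ℂ h) :
    ∃ g, TangentToId ℂ g ∧ RelatedAt ℂ g V (fderiv ℂ V 0) 0 ∧
      ∀ Z, AnalyticAt ℂ Z 0 → Z 0 = 0 → VectorField.lieBracket ℂ V Z =ᶠ[𝓝 0] 0 →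
        RelatedAt ℂ h Z (fderiv ℂ Z 0) 0 → RelatedAt ℂ g Z (fderiv ℂ Z 0) 0 := by
  have hV' : AnalyticAt ℂ V 0 := hV 0 (mem_of_mem_nhds hU)
  let a : ℂ := 2 * Real.pi * Complex.I
  have ha0 : a ≠ 0 := Complex.two_pi_I_ne_zero
  let W : E → E := fun x => a • V x
  have hW : AnalyticAt ℂ W 0 := hV'.const_smul
  have hW0 : W 0 = 0 := by simp [W, hV0]
  have hWV : fderiv ℂ W 0 = a • fderiv ℂ V 0 := fderiv_fun_const_smul hV'.differentiableAt a
  obtain ⟨Φ, hΦ⟩ := exists_isLocalFlow hW hW0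
  have hclosed := hper.eventually_apply_one_eq hU hV hΦ
  refine ⟨flowAverage W Φ h, hΦ.tangentToId_flowAverage hW hW0
    (hΦ.exp_fderiv_eq_one hW hW0 hclosed) hh, ?_, fun Z hZ hZ0 hVZ hhZ => ?_⟩
  · have := (hΦ.relatedAt_flowAverage hW hW0 hclosed hh.analyticAt).const_smul a⁻¹
    simpa only [hWV, W, smul_apply, inv_smul_smul₀ ha0] using this
  · refine hΦ.relatedAt_flowAverage_of_lieBracket_eventuallyEq_zero hW hW0 hh.analyticAt
      hh.map_zero hZ hZ0 ?_ hhZ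
    filter_upwards [hVZ, hV'.eventually_analyticAt] with x hx hVx
    have := VectorField.lieBracket_const_smul_left (c := a) (W := Z) hVx.differentiableAt
    exact this.trans (by rw [hx, Pi.zero_apply, smul_zero])

theorem exists_tangentToId_forall_relatedAt {E κ : Type*} [NormedAddCommGroup E] [NormedSpace ℂ E]
    [CompleteSpace E] {V : κ → E → E} {U : Set E} (hU : U ∈ 𝓝 0)
    (hV : ∀ k, AnalyticOnNhd ℂ (V k) U) (hV0 : ∀ k, V k 0 = 0)
    (hcomm : ∀ j k, ∀ x ∈ U, VectorField.lieBracket ℂ (V j) (V k) x = 0)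
    (hper : ∀ k, HasPeriodicFlow (V k) U) (s : Finset κ) :
    ∃ h, TangentToId ℂ h ∧ ∀ k ∈ s, RelatedAt ℂ h (V k) (fderiv ℂ (V k) 0) 0 := by
  induction s using Finset.cons_induction with
  | empty =>
    exact ⟨id, ⟨analyticAt_id, rfl, fderiv_id⟩, fun k hk => absurd hk (Finset.notMem_empty k)⟩
  | cons j s _ ih =>
    obtain ⟨h, hh, hlin⟩ := ih
    obtain ⟨g, hg, hgj, hgZ⟩ := (hper j).exists_tangentToId_relatedAt hU (hV j) (hV0 j) hh
    refine ⟨g, hg, Finset.forall_mem_cons _ _ |>.2 ⟨hgj, fun k hk => ?_⟩⟩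
    exact hgZ (V k) (hV k 0 (mem_of_mem_nhds hU)) (hV0 k)
      (eventually_of_mem hU (hcomm j k)) (hlin k hk)

theorem admitsPDNormalization_of_relatedAt_semisimple {𝕂 : Type*} [NontriviallyNormedField 𝕂]
    [CompleteSpace 𝕂] {n : ℕ} {X Z h : (Fin n → 𝕂) → Fin n → 𝕂} (hX : AnalyticAt 𝕂 X 0)
    (hX0 : X 0 = 0) {S N : (Fin n → 𝕂) →L[𝕂] Fin n → 𝕂} (hJC : fderiv 𝕂 X 0 = S + N)
    (hS : Module.End.IsSemisimple (S : Module.End 𝕂 (Fin n → 𝕂)))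
    (hN : IsNilpotent (N : Module.End 𝕂 (Fin n → 𝕂))) (hSN : S ∘L N = N ∘L S)
    (hh : TangentToId 𝕂 h) (hZ : AnalyticAt 𝕂 Z 0) (hhZ : RelatedAt 𝕂 h Z S 0)
    (hXZ : VectorField.lieBracket 𝕂 X Z =ᶠ[𝓝 0] 0) : AdmitsPDNormalization 𝕂 X := by
  obtain ⟨e, rfl, h0e, -, he⟩ := hh.exists_isBianalytic univ_mem
  have hφ := hh.symm he h0e
  have hφ0 : Tendsto e.symm (𝓝 0) (𝓝 0) := by
    simpa only [ContinuousAt, hφ.map_zero] using hφ.analyticAt.continuousAt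
  let Y := pushforward 𝕂 e X
  have hXY : RelatedAt 𝕂 e X Y 0 := relatedAt_pushforward e X h0e
  have hYX : RelatedAt 𝕂 e.symm Y X 0 := hh.map_zero ▸ he.relatedAt_symm h0e hXY
  have hYe : AnalyticAt 𝕂 Y (e 0) := he.analyticAt_pushforward h0e hX
  have hY : AnalyticAt 𝕂 Y 0 := hh.map_zero ▸ hYe
  have hY0 : Y 0 = 0 := by simp [Y, _root_.pushforward, hφ.map_zero, hX0]
  have hYd : fderiv 𝕂 Y 0 = S + N := hJC ▸ (hh.fderiv_eq_of_relatedAt hXY hX hY hX0).symm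
  have hYS : ∀ᶠ y in 𝓝 0, VectorField.lieBracket 𝕂 Y S y = 0 := by
    filter_upwards [hφ0.eventually (hXY.lieBracket hhZ hh.analyticAt hX hZ hYe (S.analyticAt _)),
      hφ0.eventually hXZ, e.open_target.mem_nhds (hh.map_zero ▸ e.map_source h0e)]
      with y hy hXZy hye
    rw [← e.right_inv hye, ← hy, hXZy, Pi.zero_apply, map_zero]
  obtain ⟨O, hO, hOo, h0O⟩ := eventually_nhds_iff.1
    ((hY.eventually_analyticAt.and hφ.analyticAt.eventually_analyticAt).and (hYS.and hYX))
  exact ⟨O, Y, e.symm, hOo, h0O, fun y hy => (hO y hy).1.1, fun y hy => (hO y hy).1.2, hY0,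
    hφ.map_zero, hφ.fderiv_zero ▸ Function.bijective_id,
    ⟨S, N, hYd, hS, hN, hSN, fun y hy => (hO y hy).2.1⟩, fun y hy => (hO y hy).2.2⟩

theorem lieBracket_sum_smul_eq_zero {𝕜 E κ : Type*} [NontriviallyNormedField 𝕜]
    [NormedAddCommGroup E] [NormedSpace 𝕜 E] {X : E → E} {V : κ → E → E} {x : E} (s : Finset κ)
    (α : κ → 𝕜) (hV : ∀ k ∈ s, DifferentiableAt 𝕜 (V k) x)
    (hXV : ∀ k ∈ s, VectorField.lieBracket 𝕜 X (V k) x = 0) :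
    VectorField.lieBracket 𝕜 X (fun y => ∑ k ∈ s, α k • V k y) x = 0 := by
  have hsum : HasFDerivAt (fun y => ∑ k ∈ s, α k • V k y) (∑ k ∈ s, α k • fderiv 𝕜 (V k) x) x :=
    .fun_sum fun k hk => (hV k hk).hasFDerivAt.const_smul (α k)
  rw [VectorField.lieBracket, hsum.fderiv, map_sum, sum_apply, ← Finset.sum_sub_distrib]
  refine Finset.sum_eq_zero fun k hk => ?_
  rw [smul_apply, map_smul, sub_eq_zero.1 (hXV k hk), sub_self]

theorem AdmitsTorusAction.admitsPDNormalization {n : ℕ} {κ : Type*} {X : (Fin n → ℂ) → Fin n → ℂ}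
    {ρ : κ → Fin n → ℤ} (h : AdmitsTorusAction X ρ) (hX : AnalyticAt ℂ X 0) (hX0 : X 0 = 0)
    {γ : Fin n → ℂ} {N : (Fin n → ℂ) →L[ℂ] Fin n → ℂ} (hJC : fderiv ℂ X 0 = diagCLM γ + N)
    (hN : IsNilpotent (N : Module.End ℂ (Fin n → ℂ))) (hγN : diagCLM γ ∘L N = N ∘L diagCLM γ)
    (hγ : γ ∈ Submodule.span ℂ (range fun k j => (ρ k j : ℂ))) : AdmitsPDNormalization ℂ X := by
  obtain ⟨U, hUo, h0U, V, hV, hVρ, hcomm, hXV, hper⟩ := h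
  obtain ⟨α, rfl⟩ := Finsupp.mem_span_range_iff_exists_finsupp.1 hγ
  have hU : U ∈ 𝓝 0 := hUo.mem_nhds h0U
  obtain ⟨h, hh, hlin⟩ := exists_tangentToId_forall_relatedAt hU hV (fun k => (hVρ k).1) hcomm hper
    α.support
  have hZ : AnalyticAt ℂ (fun x => ∑ k ∈ α.support, α k • V k x) 0 :=
    Finset.analyticAt_fun_sum _ fun k _ => (hV k 0 h0U).const_smul (c := α k)
  refine admitsPDNormalization_of_relatedAt_semisimple hX hX0 hJC (isSemisimple_diagCLM _) hN hγN
    hh hZ ?_ ?_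
  · refine (RelatedAt.sum α.support fun k hk => (hlin k hk).const_smul (α k)).congr
      hh.analyticAt.continuousAt .rfl (.of_forall fun x => ?_)
    simp only [(hVρ _).2, Finsupp.sum, diagCLM_sum_smul, sum_apply, smul_apply]
  · filter_upwards [hU] with x hx
    exact lieBracket_sum_smul_eq_zero α.support α (fun k _ => (hV k x hx).differentiableAt)
      fun k _ => hXV k x hx

end Normalization

theorem admitsPDNormalization_iff_torusAction_general {n : ℕ} {κ : Type*}
    {X : (Fin n → ℂ) → Fin n → ℂ} (hX : AnalyticAt ℂ X 0) (hX0 : X 0 = 0)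
    {γ : Fin n → ℂ} {N : (Fin n → ℂ) →L[ℂ] Fin n → ℂ} (hJC : fderiv ℂ X 0 = diagCLM γ + N)
    (hN : IsNilpotent (N : Module.End ℂ (Fin n → ℂ))) (hγN : diagCLM γ ∘L N = N ∘L diagCLM γ)
    {ρ : κ → Fin n → ℤ} (hρ : ∀ k, ρ k ∈ QLattice γ)
    (hγ : γ ∈ Submodule.span ℂ (range fun k j => (ρ k j : ℂ))) :
    AdmitsPDNormalization ℂ X ↔ AdmitsTorusAction X ρ :=
  ⟨fun h => h.admitsTorusAction hX hJC hN hγN hρ,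
    fun h => h.admitsPDNormalization hX hX0 hJC hN hγN hγ⟩

/-- **Toric characterization of Poincaré–Dulac normalization** (Zung). A
holomorphic vector field `X` near `0 ∈ ℂⁿ` with `X 0 = 0` and semisimple
linear part `diag γ` admits a convergent Poincaré–Dulac normalization iff it
is preserved by an effective holomorphic torus action of dimension `r` (the
toric degree) with the appropriate weights: there are holomorphic vector
fields `V₁, …, V_r` near `0`, pairwise commuting and commuting with `X`,
with `V_k 0 = 0`, `DV_k(0) = diag ρᵏ` for a `ℤ`-basis `ρ¹, …, ρʳ` of `Q(γ)`,
such that each `i·V_k` is periodic of period `2π`. -/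
theorem admitsPDNormalization_iff_torusAction
    (n : ℕ) (X : (Fin n → ℂ) → (Fin n → ℂ))
    (W : Set (Fin n → ℂ)) (hWopen : IsOpen W) (h0W : (0 : Fin n → ℂ) ∈ W)
    (hXan : AnalyticOnNhd ℂ X W) (hX0 : X 0 = 0)
    (γ : Fin n → ℂ) (N : (Fin n → ℂ) →L[ℂ] (Fin n → ℂ))
    (hJC : fderiv ℂ X 0 = diagCLM γ + N)
    (hnil : IsNilpotent (N : Module.End ℂ (Fin n → ℂ)))
    (hSN : diagCLM γ ∘L N = N ∘L diagCLM γ)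
    (r : ℕ) (ρ : Fin r → Fin n → ℤ)
    (hρmem : ∀ k, ρ k ∈ QLattice γ)
    (hρbasis : ∀ σ ∈ QLattice γ, ∃! a : Fin r → ℤ, ∑ k, a k • ρ k = σ) :
    AdmitsPDNormalization ℂ X ↔
      ∃ U : Set (Fin n → ℂ), IsOpen U ∧ (0 : Fin n → ℂ) ∈ U ∧
        ∃ V : Fin r → (Fin n → ℂ) → (Fin n → ℂ),
          (∀ k, AnalyticOnNhd ℂ (V k) U) ∧
          (∀ k, V k 0 = 0 ∧
            fderiv ℂ (V k) 0 = diagCLM (fun j => (ρ k j : ℂ))) ∧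
          (∀ j k, ∀ x ∈ U, VectorField.lieBracket ℂ (V j) (V k) x = 0) ∧
          (∀ k, ∀ x ∈ U, VectorField.lieBracket ℂ X (V k) x = 0) ∧
          (∀ k, ∀ x ∈ U, ∃ c : ℝ → (Fin n → ℂ),
            (∀ t, c t ∈ U) ∧ c 0 = x ∧
            (∀ t : ℝ, HasDerivAt c (Complex.I • V k (c t)) t) ∧
            (∀ t : ℝ, c (t + 2 * Real.pi) = c t)) :=
  admitsPDNormalization_iff_torusAction_general (hXan 0 h0W) hX0 hJC hnil hSN hρmem
    (mem_span_of_qLattice_subset_span fun σ hσ => by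
      obtain ⟨a, rfl, -⟩ := hρbasis σ hσ
      exact Submodule.sum_mem _ fun k _ => Submodule.smul_mem _ _ (Submodule.subset_span ⟨k, rfl⟩))
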